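/- Let n ≥ 17 be fixed and let m, σ > 0 satisfy 2/√n < σ/m < 1/2. Let (Y_d)_{d≥1} be a unitarily invariant sequence of random self-adjoint matrices Y_d ∈ M_n(ℂ) ⊗ M_d(ℂ) converging strongly to the semicircular distribution SC_{m,σ} (for instance Y_d = m·I_{nd} + σ·X_d with X_d a standard GUE matrix). Then almost surely, for all sufficiently large d, Y_d is positive semidefinite, Y_d ∈ PPT_{n,d}, and Y_d ∉ SEP_{n,d}. -/

import Mathlib

open MeasureTheory Filter Topology Polynomial Matrix Kronecker
open scoped ComplexOrder

noncomputable section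

/-- Measurable space structure on matrices (entrywise). -/
instance matMS (m n : Type*) : MeasurableSpace (Matrix m n ℂ) :=
  inferInstanceAs (MeasurableSpace (m → n → ℂ))

/-- The ℓ²→ℓ² operator norm of a complex square matrix. -/
def opNorm {N : Type*} [Fintype N] [DecidableEq N] (X : Matrix N N ℂ) : ℝ :=
  ‖Matrix.toEuclideanCLM (𝕜 := ℂ) (n := N) X‖

/-- Application of a real polynomial to a complex square matrix. -/
def polyApply {N : Type*} [Fintype N] [DecidableEq N] (P : Polynomial ℝ)
    (X : Matrix N N ℂ) : Matrix N N ℂ :=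
  Polynomial.aeval X (P.map (algebraMap ℝ ℂ))

/-- The (topological) support of a measure on ℝ: points all of whose open
neighbourhoods have positive measure. -/
def msupport (μ : Measure ℝ) : Set ℝ :=
  {x | ∀ U : Set ℝ, IsOpen U → x ∈ U → 0 < μ U}

/-- Strong convergence of a sequence of random matrices `X d ∈ M_n(ℂ) ⊗ M_d(ℂ)`
towards a compactly supported probability measure `μ`: almost surely, for every
real polynomial `P`, the normalized traces of `P(X d)` converge to `∫ P dμ` and the
operator norms of `P(X d)` converge to `sup {|P(x)| : x ∈ supp μ}`. -/
def StrongConv {Ω : Type*} [MeasurableSpace Ω] (ℙ : Measure Ω) (n : ℕ)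
    (X : (d : ℕ) → Ω → Matrix (Fin n × Fin d) (Fin n × Fin d) ℂ)
    (μ : Measure ℝ) : Prop :=
  ∀ᵐ ω ∂ℙ, ∀ P : Polynomial ℝ,
    Tendsto (fun d : ℕ => ((n : ℂ) * (d : ℂ))⁻¹ * (polyApply P (X d ω)).trace) atTop
      (𝓝 ((∫ x, P.eval x ∂μ : ℝ) : ℂ)) ∧
    Tendsto (fun d : ℕ => opNorm (polyApply P (X d ω))) atTop
      (𝓝 (sSup ((fun x => |P.eval x|) '' msupport μ)))

/-- Unitary invariance of a sequence of random matrices: for every `d` and every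
unitary `U`, the random matrix `U (X d) U*` has the same distribution as `X d`. -/
def UnitInv {Ω : Type*} [MeasurableSpace Ω] (ℙ : Measure Ω) (n : ℕ)
    (X : (d : ℕ) → Ω → Matrix (Fin n × Fin d) (Fin n × Fin d) ℂ) : Prop :=
  ∀ d : ℕ, ∀ U : Matrix (Fin n × Fin d) (Fin n × Fin d) ℂ,
    U ∈ unitary (Matrix (Fin n × Fin d) (Fin n × Fin d) ℂ) →
    Measure.map (fun ω => U * X d ω * star U) ℙ = Measure.map (X d) ℙ

/-- The separable cone `SEP_{n,d}`. -/
def SEP (n d : ℕ) : Set (Matrix (Fin n × Fin d) (Fin n × Fin d) ℂ) :=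
  {X | ∃ (k : ℕ) (A : Fin k → Matrix (Fin n) (Fin n) ℂ)
      (B : Fin k → Matrix (Fin d) (Fin d) ℂ),
    (∀ i, (A i).PosSemidef) ∧ (∀ i, (B i).PosSemidef) ∧ X = ∑ i, A i ⊗ₖ B i}

/-- The partial transpose on `M_n(ℂ) ⊗ M_d(ℂ)`: transposition of the first factor. -/
def ptrans {n d : ℕ} (X : Matrix (Fin n × Fin d) (Fin n × Fin d) ℂ) :
    Matrix (Fin n × Fin d) (Fin n × Fin d) ℂ :=
  fun p q => X (q.1, p.2) (p.1, q.2)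

/-- The PPT cone `PPT_{n,d}`: positive semidefinite matrices with positive
semidefinite partial transpose. -/
def PPT (n d : ℕ) : Set (Matrix (Fin n × Fin d) (Fin n × Fin d) ℂ) :=
  {X | X.PosSemidef ∧ (ptrans X).PosSemidef}

/-- The semicircular distribution `SC_{m,σ}` with mean `m` and variance `σ²`:
density `√(4σ² − (x−m)²)/(2πσ²)` on `[m−2σ, m+2σ]`. -/
def SC (m σ : ℝ) : Measure ℝ :=
  MeasureTheory.volume.withDensity (fun x => ENNReal.ofReal
    (Set.indicator (Set.Icc (m - 2 * σ) (m + 2 * σ))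
      (fun y => Real.sqrt (4 * σ ^ 2 - (y - m) ^ 2) / (2 * Real.pi * σ ^ 2)) x))

/-- The `k`-th moment of the standard Gaussian distribution, as a complex number. -/
def gaussMoment (k : ℕ) : ℂ := ∫ x, (x : ℂ) ^ k ∂(ProbabilityTheory.gaussianReal 0 1)

lemma integrable_pow_gaussianReal (k : ℕ) :
    Integrable (fun x : ℝ => x ^ k) (ProbabilityTheory.gaussianReal 0 1) := by
  have h := (ProbabilityTheory.memLp_id_gaussianReal (μ := 0) (v := 1) (k : NNReal))
  rcases Nat.eq_zero_or_pos k with rfl | hk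
  · simp
  have := h.integrable_norm_pow (by exact_mod_cast hk.ne')
  refine (integrable_norm_iff (by fun_prop)).1 ?_
  simpa using this

lemma integrable_ofReal_pow_gaussianReal (k : ℕ) :
    Integrable (fun x : ℝ => (x : ℂ) ^ k) (ProbabilityTheory.gaussianReal 0 1) := by
  simpa using (integrable_pow_gaussianReal k).ofReal (𝕜 := ℂ)

lemma integrable_pow_mul_gaussianPDFReal (k : ℕ) :
    Integrable (fun x : ℝ => x ^ k * ProbabilityTheory.gaussianPDFReal 0 1 x) := by
  have h := integrable_pow_gaussianReal k
  rw [ProbabilityTheory.gaussianReal_of_var_ne_zero _ one_ne_zero,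
    integrable_withDensity_iff (ProbabilityTheory.measurable_gaussianPDF _ _)
      (by simp [ProbabilityTheory.gaussianPDF])] at h
  simpa using h

lemma integral_pow_succ_gaussianReal (k : ℕ) :
    ∫ x, x ^ (k + 1) ∂(ProbabilityTheory.gaussianReal 0 1) =
      k * ∫ x, x ^ (k - 1) ∂(ProbabilityTheory.gaussianReal 0 1) := by
  have hpdf : ∀ x, HasDerivAt (ProbabilityTheory.gaussianPDFReal 0 1)
      (-x * ProbabilityTheory.gaussianPDFReal 0 1 x) x := by
    intro x
    have h := (((hasDerivAt_id x).pow 2).neg.div_const 2).exp.const_mul (√(2 * Real.pi * 1))⁻¹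
    have e : ProbabilityTheory.gaussianPDFReal 0 1 =
        fun x => (√(2 * Real.pi * 1))⁻¹ * Real.exp (-(x ^ 2) / 2) := by
      funext y
      simp [ProbabilityTheory.gaussianPDFReal]
    rw [e]
    refine h.congr_deriv ?_
    simp
    ring
  have hd : ∀ x, HasDerivAt (fun x : ℝ => x ^ k * ProbabilityTheory.gaussianPDFReal 0 1 x)
      (k * (x ^ (k - 1) * ProbabilityTheory.gaussianPDFReal 0 1 x)
        - x ^ (k + 1) * ProbabilityTheory.gaussianPDFReal 0 1 x) x := by
    intro x
    refine ((hasDerivAt_pow k x).mul (hpdf x)).congr_deriv ?_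
    ring
  have hI := integrable_pow_mul_gaussianPDFReal
  have h0 := integral_eq_zero_of_hasDerivAt_of_integrable hd
    (((hI (k - 1)).const_mul _).sub (hI (k + 1))) (hI k)
  rw [integral_sub ((hI (k - 1)).const_mul _) (hI (k + 1)), integral_const_mul] at h0
  simp only [ProbabilityTheory.integral_gaussianReal_eq_integral_smul one_ne_zero, smul_eq_mul]
  simp only [mul_comm (ProbabilityTheory.gaussianPDFReal 0 1 _)]
  linarith

lemma gaussMoment_succ (k : ℕ) : gaussMoment (k + 1) = k * gaussMoment (k - 1) := by
  have h : ∀ j, gaussMoment j = ((∫ x, x ^ j ∂(ProbabilityTheory.gaussianReal 0 1) : ℝ) : ℂ) := by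
    intro j
    rw [gaussMoment, ← integral_complex_ofReal]
    simp
  rw [h, h, integral_pow_succ_gaussianReal]
  push_cast
  rfl

section GaussianPolynomials

variable {ι : Type*} [Fintype ι]

/-- The standard Gaussian measure on `ι → ℝ`. -/
def gaussPi (ι : Type*) [Fintype ι] : Measure (ι → ℝ) :=
  Measure.pi fun _ => ProbabilityTheory.gaussianReal 0 1

instance : IsProbabilityMeasure (gaussPi ι) := by
  unfold gaussPi; infer_instance

/-- Evaluation of a complex polynomial at a real point. -/
def realEval (g : ι → ℝ) : MvPolynomial ι ℂ →+* ℂ :=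
  MvPolynomial.eval fun i => (g i : ℂ)

lemma realEval_monomial (g : ι → ℝ) (s : ι →₀ ℕ) (c : ℂ) :
    realEval g (MvPolynomial.monomial s c) = c * ∏ i, (g i : ℂ) ^ s i := by
  rw [realEval, MvPolynomial.eval_monomial, Finsupp.prod_fintype _ _ (by simp)]

lemma integrable_realEval (p : MvPolynomial ι ℂ) :
    Integrable (fun g => realEval g p) (gaussPi ι) := by
  induction p using MvPolynomial.induction_on' with
  | monomial s c =>
    simp only [realEval_monomial]
    refine Integrable.const_mul ?_ c
    exact Integrable.fintype_prod (f := fun i (x : ℝ) => (x : ℂ) ^ s i)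
      fun i => integrable_ofReal_pow_gaussianReal (s i)
  | add p q hp hq =>
    simp only [map_add]
    exact hp.add hq

/-- The expectation of a polynomial in independent standard Gaussian variables. -/
def gaussExp : MvPolynomial ι ℂ →ₗ[ℂ] ℂ where
  toFun p := ∫ g, realEval g p ∂(gaussPi ι)
  map_add' p q := by
    simp only [map_add]
    exact integral_add (integrable_realEval p) (integrable_realEval q)
  map_smul' c p := by
    simp only [MvPolynomial.smul_eq_C_mul, map_mul, RingHom.id_apply, smul_eq_mul]
    rw [← integral_const_mul]
    simp [realEval]

lemma gaussExp_apply (p : MvPolynomial ι ℂ) :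
    gaussExp p = ∫ g, realEval g p ∂(gaussPi ι) := rfl

lemma gaussExp_one : gaussExp (1 : MvPolynomial ι ℂ) = 1 := by
  simp [gaussExp_apply]

lemma gaussExp_monomial (s : ι →₀ ℕ) (c : ℂ) :
    gaussExp (MvPolynomial.monomial s c) = c * ∏ i, gaussMoment (s i) := by
  simp only [gaussExp_apply, realEval_monomial]
  rw [integral_const_mul, gaussPi,
    integral_fintype_prod_eq_prod (𝕜 := ℂ) (f := fun i (x : ℝ) => (x : ℂ) ^ s i)]
  rfl

/-- Gaussian integration by parts for polynomials. -/
lemma gaussExp_X_mul [DecidableEq ι] (i : ι) (p : MvPolynomial ι ℂ) :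
    gaussExp (MvPolynomial.X i * p) = gaussExp (MvPolynomial.pderiv i p) := by
  induction p using MvPolynomial.induction_on' with
  | monomial s c =>
    rw [MvPolynomial.pderiv_monomial, MvPolynomial.X, MvPolynomial.monomial_mul,
      gaussExp_monomial, gaussExp_monomial, ← Finset.mul_prod_erase _ _ (Finset.mem_univ i),
      ← Finset.mul_prod_erase Finset.univ
        (fun j => gaussMoment ((s - Finsupp.single i 1 : ι →₀ ℕ) j)) (Finset.mem_univ i)]
    have h1 : ∀ j ∈ Finset.univ.erase i, gaussMoment ((Finsupp.single i 1 + s : ι →₀ ℕ) j) =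
        gaussMoment ((s - Finsupp.single i 1 : ι →₀ ℕ) j) := by
      intro j hj
      have : i ≠ j := (Finset.ne_of_mem_erase hj).symm
      simp [this]
    rw [Finset.prod_congr rfl h1]
    simp only [Finsupp.add_apply, Finsupp.single_eq_same, Finsupp.tsub_apply, add_comm 1 (s i),
      gaussMoment_succ]
    ring
  | add p q hp hq => rw [mul_add, map_add, map_add, map_add, hp, hq]

end GaussianPolynomials

section SchwingerDyson

set_option linter.unusedSectionVars false

variable {ι : Type*} [Fintype ι] {N : Type*} [Fintype N] [DecidableEq N]

/-- A family `E` of Hermitian matrices such that `∑ g_α E_α`, with `g_α` independent standard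
Gaussian variables, is a normalized GUE matrix. -/
structure IsGUEFamily (E : ι → Matrix N N ℂ) : Prop where
  isHermitian : ∀ α, (E α).IsHermitian
  sum_mul : ∀ i j k l, ∑ α, E α i j * E α k l =
    if i = l ∧ j = k then ((Fintype.card N : ℂ))⁻¹ else 0

/-- A complex matrix seen as a matrix of constant polynomials. -/
def constMat (ι : Type*) (A : Matrix N N ℂ) : Matrix N N (MvPolynomial ι ℂ) :=
  A.map MvPolynomial.C

/-- The matrix `∑ X_α E_α` with polynomial entries. -/
def polyMat (E : ι → Matrix N N ℂ) : Matrix N N (MvPolynomial ι ℂ) :=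
  ∑ α, (MvPolynomial.X α : MvPolynomial ι ℂ) • constMat ι (E α)

/-- The normalized trace of the `k`-th power of `polyMat E`. -/
def trPow (E : ι → Matrix N N ℂ) (k : ℕ) : MvPolynomial ι ℂ :=
  MvPolynomial.C ((Fintype.card N : ℂ))⁻¹ * (polyMat E ^ k).trace

/-- A product of normalized traces of powers of `polyMat E`. -/
def trProd (E : ι → Matrix N N ℂ) (s : Multiset ℕ) : MvPolynomial ι ℂ :=
  (s.map (trPow E)).prod

lemma sum_eq_of_covariance {S : Type*} [CommRing S] (F : ι → Matrix N N S) (c : S)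
    (h : ∀ i j k l, ∑ α, F α i j * F α k l = if i = l ∧ j = k then c else 0)
    (f : N → N → N → N → S) :
    ∑ α, ∑ i, ∑ j, ∑ k, ∑ l, F α i j * F α k l * f i j k l = c * ∑ i, ∑ j, f i j j i := by
  rw [Finset.sum_comm, Finset.mul_sum]
  refine Finset.sum_congr rfl fun i _ => ?_
  rw [Finset.sum_comm, Finset.mul_sum]
  refine Finset.sum_congr rfl fun j _ => ?_
  rw [Finset.sum_comm, Finset.sum_eq_single j, Finset.sum_comm, Finset.sum_eq_single i]
  · rw [← Finset.sum_mul, h]; simp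
  · intro l _ hl
    rw [← Finset.sum_mul, h]; simp [hl.symm]
  · simp
  · intro k _ hk
    rw [Finset.sum_comm]
    refine Finset.sum_eq_zero fun l _ => ?_
    rw [← Finset.sum_mul, h]; simp [hk.symm]
  · simp

variable {E : ι → Matrix N N ℂ}

lemma IsGUEFamily.sum_mul_constMat (hE : IsGUEFamily E) (i j k l : N) :
    ∑ α, constMat ι (E α) i j * constMat ι (E α) k l =
      if i = l ∧ j = k then MvPolynomial.C ((Fintype.card N : ℂ))⁻¹ else 0 := by
  simp only [constMat, Matrix.map_apply, ← map_mul, ← map_sum, hE.sum_mul]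
  split_ifs <;> simp

lemma IsGUEFamily.sum_trace_mul_mul (hE : IsGUEFamily E) (A B : Matrix N N (MvPolynomial ι ℂ)) :
    ∑ α, (constMat ι (E α) * A * constMat ι (E α) * B).trace =
      MvPolynomial.C ((Fintype.card N : ℂ))⁻¹ * (A.trace * B.trace) := by
  have h := sum_eq_of_covariance _ _ hE.sum_mul_constMat fun i j k l => A j k * B l i
  have h2 : A.trace * B.trace = ∑ i, ∑ j, A j j * B i i := by
    simp only [Matrix.trace, Matrix.diag, Finset.sum_mul, Finset.mul_sum]
  rw [h2, ← h]
  refine Finset.sum_congr rfl fun α _ => ?_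
  simp only [Matrix.trace, Matrix.diag, Matrix.mul_apply, Finset.sum_mul]
  refine Finset.sum_congr rfl fun i _ => ?_
  have : ∀ g : N → N → N → MvPolynomial ι ℂ,
      ∑ j, ∑ k, ∑ l, g j k l = ∑ l, ∑ k, ∑ j, g j k l := by
    intro g
    rw [Finset.sum_comm]
    simp_rw [Finset.sum_comm (s := Finset.univ) (t := Finset.univ) (f := fun j l => g j _ l)]
    rw [Finset.sum_comm]
  rw [this]
  refine Finset.sum_congr rfl fun l _ => Finset.sum_congr rfl fun k _ =>
    Finset.sum_congr rfl fun j _ => ?_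
  ring

lemma IsGUEFamily.sum_trace_mul_trace (hE : IsGUEFamily E) (A B : Matrix N N (MvPolynomial ι ℂ)) :
    ∑ α, (constMat ι (E α) * A).trace * (constMat ι (E α) * B).trace =
      MvPolynomial.C ((Fintype.card N : ℂ))⁻¹ * (A * B).trace := by
  have h := sum_eq_of_covariance _ _ hE.sum_mul_constMat fun i j k l => A l k * B j i
  have h2 : (A * B).trace = ∑ i, ∑ j, A i j * B j i := by
    simp only [Matrix.trace, Matrix.diag, Matrix.mul_apply]
  rw [h2, ← h]
  refine Finset.sum_congr rfl fun α _ => ?_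
  simp only [Matrix.trace, Matrix.diag, Matrix.mul_apply, Finset.sum_mul, Finset.mul_sum]
  refine Finset.sum_congr rfl fun i _ => Finset.sum_congr rfl fun j _ =>
    Finset.sum_congr rfl fun k _ => Finset.sum_congr rfl fun l _ => ?_
  ring

lemma pderiv_matrix_mul (α : ι) (A B : Matrix N N (MvPolynomial ι ℂ)) :
    (A * B).map (MvPolynomial.pderiv α) =
      A.map (MvPolynomial.pderiv α) * B + A * B.map (MvPolynomial.pderiv α) := by
  ext1 i j
  simp only [Matrix.map_apply, Matrix.mul_apply, Matrix.add_apply, map_sum, ← Finset.sum_add_distrib,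
    MvPolynomial.pderiv_mul]

lemma pderiv_constMat (α : ι) (A : Matrix N N ℂ) :
    (constMat ι A).map (MvPolynomial.pderiv α) = 0 := by
  ext1 i j
  simp [constMat]

lemma pderiv_polyMat [DecidableEq ι] (α : ι) :
    (polyMat E).map (MvPolynomial.pderiv α) = constMat ι (E α) := by
  ext1 i j
  simp only [polyMat, Matrix.map_apply, Matrix.sum_apply, Matrix.smul_apply, smul_eq_mul, map_sum,
    MvPolynomial.pderiv_mul, constMat, MvPolynomial.pderiv_C, mul_zero, add_zero]
  rw [Finset.sum_eq_single α]
  · simp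
  · intro b _ hb
    rw [MvPolynomial.pderiv_X_of_ne hb, zero_mul]
  · simp

lemma pderiv_polyMat_pow [DecidableEq ι] (α : ι) (k : ℕ) :
    (polyMat E ^ k).map (MvPolynomial.pderiv α) =
      ∑ j ∈ Finset.range k, polyMat E ^ j * constMat ι (E α) * polyMat E ^ (k - 1 - j) := by
  induction k with
  | zero =>
    ext1 i j
    simp only [pow_zero, Matrix.map_apply, Matrix.one_apply, Finset.range_zero, Finset.sum_empty,
      Matrix.zero_apply]
    split_ifs <;> simp
  | succ k ih =>
    rw [pow_succ, pderiv_matrix_mul, ih, pderiv_polyMat, Finset.sum_range_succ, Finset.sum_mul]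
    refine congrArg₂ (· + ·) ?_ ?_
    · refine Finset.sum_congr rfl fun j hj => ?_
      have : k + 1 - 1 - j = (k - 1 - j) + 1 := by
        have := Finset.mem_range.1 hj
        omega
      rw [this, pow_succ]
      simp only [Matrix.mul_assoc]
    · simp

lemma pderiv_trace (α : ι) (A : Matrix N N (MvPolynomial ι ℂ)) :
    MvPolynomial.pderiv α A.trace = (A.map (MvPolynomial.pderiv α)).trace := by
  simp [Matrix.trace]

lemma pderiv_trace_polyMat_pow [DecidableEq ι] (α : ι) (k : ℕ) :
    MvPolynomial.pderiv α (polyMat E ^ k).trace =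
      k * (constMat ι (E α) * polyMat E ^ (k - 1)).trace := by
  rw [pderiv_trace, pderiv_polyMat_pow, Matrix.trace_sum]
  rw [Finset.sum_congr rfl (g := fun _ => (constMat ι (E α) * polyMat E ^ (k - 1)).trace)]
  · simp
  · intro j hj
    rw [Matrix.trace_mul_cycle, ← pow_add, Matrix.trace_mul_comm]
    congr 3
    have := Finset.mem_range.1 hj
    omega

lemma pderiv_trace_constMat_mul [DecidableEq ι] (α : ι) (k : ℕ) :
    MvPolynomial.pderiv α (constMat ι (E α) * polyMat E ^ k).trace =
      ∑ j ∈ Finset.range k, (constMat ι (E α) * polyMat E ^ j * constMat ι (E α) *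
        polyMat E ^ (k - 1 - j)).trace := by
  rw [pderiv_trace, pderiv_matrix_mul, pderiv_constMat, zero_mul, zero_add, pderiv_polyMat_pow,
    Finset.mul_sum, Matrix.trace_sum]
  simp only [Matrix.mul_assoc]

lemma trPow_zero [Nonempty N] : trPow E 0 = 1 := by
  simp only [trPow, pow_zero, Matrix.trace_one]
  rw [← map_natCast (MvPolynomial.C (σ := ι) (R := ℂ)), ← map_mul, inv_mul_cancel₀, map_one]
  exact_mod_cast Fintype.card_ne_zero

lemma trPow_succ (k : ℕ) :
    trPow E (k + 1) = MvPolynomial.C ((Fintype.card N : ℂ))⁻¹ *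
      ∑ α, MvPolynomial.X α * (constMat ι (E α) * polyMat E ^ k).trace := by
  rw [trPow, pow_succ']
  congr 1
  conv_lhs => enter [1, 1]; rw [polyMat]
  rw [Finset.sum_mul, Matrix.trace_sum]
  simp [Matrix.trace_smul]

lemma IsGUEFamily.sum_trace_mul_pderiv_trPow [DecidableEq ι] (hE : IsGUEFamily E) (k a : ℕ) :
    MvPolynomial.C ((Fintype.card N : ℂ))⁻¹ * ∑ α, (constMat ι (E α) * polyMat E ^ k).trace *
        MvPolynomial.pderiv α (trPow E a) =
      MvPolynomial.C ((a : ℂ) / (Fintype.card N : ℂ) ^ 2) * trPow E (k + a - 1) := by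
  rcases a with _ | a
  · simp [trPow]
  have h := hE.sum_trace_mul_trace (polyMat E ^ k) (polyMat E ^ a)
  have : ∀ α, (constMat ι (E α) * polyMat E ^ k).trace *
        MvPolynomial.pderiv α (trPow E (a + 1)) =
      (MvPolynomial.C ((Fintype.card N : ℂ))⁻¹ : MvPolynomial ι ℂ) *
        ((a + 1 : ℕ) : MvPolynomial ι ℂ) * ((constMat ι (E α) *
        polyMat E ^ k).trace * (constMat ι (E α) * polyMat E ^ a).trace) := by
    intro α
    rw [trPow, MvPolynomial.pderiv_C_mul, pderiv_trace_polyMat_pow, Nat.add_sub_cancel]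
    ring
  rw [Finset.sum_congr rfl fun α _ => this α, ← Finset.mul_sum, h, ← pow_add, trPow,
    show k + (a + 1) - 1 = k + a from rfl, div_eq_mul_inv, ← inv_pow]
  simp only [map_mul, map_pow, map_natCast]
  ring

lemma IsGUEFamily.sum_trace_mul_pderiv_trProd [DecidableEq ι] (hE : IsGUEFamily E) (k : ℕ)
    (s : Multiset ℕ) :
    MvPolynomial.C ((Fintype.card N : ℂ))⁻¹ * ∑ α, (constMat ι (E α) * polyMat E ^ k).trace *
        MvPolynomial.pderiv α (trProd E s) =
      (s.map fun a : ℕ => MvPolynomial.C ((a : ℂ) / (Fintype.card N : ℂ) ^ 2) *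
        (trPow E (k + a - 1) * trProd E (s.erase a))).sum := by
  induction s using Multiset.induction with
  | empty => simp [trProd]
  | cons b s ih =>
    have hd : ∀ α, MvPolynomial.pderiv α (trProd E (b ::ₘ s)) =
        trPow E b * MvPolynomial.pderiv α (trProd E s) +
          trProd E s * MvPolynomial.pderiv α (trPow E b) := by
      intro α
      simp only [trProd, Multiset.map_cons, Multiset.prod_cons, MvPolynomial.pderiv_mul]
      ring
    have hs : ∀ a ∈ s, MvPolynomial.C ((a : ℂ) / (Fintype.card N : ℂ) ^ 2) *
        (trPow E (k + a - 1) * trProd E ((b ::ₘ s).erase a)) =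
        trPow E b * (MvPolynomial.C ((a : ℂ) / (Fintype.card N : ℂ) ^ 2) *
        (trPow E (k + a - 1) * trProd E (s.erase a))) := by
      intro a ha
      rw [Multiset.erase_cons_tail_of_mem ha]
      simp only [trProd, Multiset.map_cons, Multiset.prod_cons]
      ring
    rw [Multiset.map_cons, Multiset.sum_cons, Multiset.map_congr rfl hs, Multiset.sum_map_mul_left,
      ← ih, Multiset.erase_cons_head, ← mul_assoc, ← hE.sum_trace_mul_pderiv_trPow]
    simp only [hd, mul_add, Finset.sum_add_distrib, Finset.mul_sum, Finset.sum_mul]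
    rw [add_comm]
    exact congrArg₂ (· + ·) (Finset.sum_congr rfl fun α _ => by ring)
      (Finset.sum_congr rfl fun α _ => by ring)

/-- The Schwinger-Dyson equation for the mixed moments of traces of a GUE matrix. -/
lemma IsGUEFamily.schwinger_dyson (hE : IsGUEFamily E) (k : ℕ) (s : Multiset ℕ) :
    gaussExp (trProd E ((k + 1) ::ₘ s)) =
      ∑ j ∈ Finset.range k, gaussExp (trProd E (j ::ₘ (k - 1 - j) ::ₘ s)) +
      (s.map fun a : ℕ => (a : ℂ) / (Fintype.card N : ℂ) ^ 2 *
        gaussExp (trProd E ((k + a - 1) ::ₘ s.erase a))).sum := by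
  classical
  have h1 : trProd E ((k + 1) ::ₘ s) = ((Fintype.card N : ℂ))⁻¹ •
      ∑ α, MvPolynomial.X α * ((constMat ι (E α) * polyMat E ^ k).trace * trProd E s) := by
    rw [trProd, Multiset.map_cons, Multiset.prod_cons, trPow_succ, MvPolynomial.smul_eq_C_mul,
      mul_assoc, Finset.sum_mul]
    simp only [mul_assoc, trProd]
  have h2 : gaussExp (trProd E ((k + 1) ::ₘ s)) = gaussExp (MvPolynomial.C
      ((Fintype.card N : ℂ))⁻¹ * ∑ α, MvPolynomial.pderiv α
        ((constMat ι (E α) * polyMat E ^ k).trace * trProd E s)) := by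
    rw [h1, ← MvPolynomial.smul_eq_C_mul, map_smul, map_smul, map_sum, map_sum]
    simp only [gaussExp_X_mul]
  have h3 : ∀ α, MvPolynomial.pderiv α ((constMat ι (E α) * polyMat E ^ k).trace * trProd E s) =
      trProd E s * MvPolynomial.pderiv α (constMat ι (E α) * polyMat E ^ k).trace +
      (constMat ι (E α) * polyMat E ^ k).trace * MvPolynomial.pderiv α (trProd E s) := by
    intro α
    rw [MvPolynomial.pderiv_mul]
    ring
  have h4 : MvPolynomial.C ((Fintype.card N : ℂ))⁻¹ *
      ∑ α, trProd E s * MvPolynomial.pderiv α (constMat ι (E α) * polyMat E ^ k).trace =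
      ∑ j ∈ Finset.range k, trProd E (j ::ₘ (k - 1 - j) ::ₘ s) := by
    simp only [pderiv_trace_constMat_mul]
    rw [← Finset.mul_sum, Finset.sum_comm, Finset.mul_sum, Finset.mul_sum]
    refine Finset.sum_congr rfl fun j _ => ?_
    rw [hE.sum_trace_mul_mul]
    simp only [trProd, Multiset.map_cons, Multiset.prod_cons, trPow]
    ring
  rw [h2, Finset.sum_congr rfl fun α _ => h3 α, Finset.sum_add_distrib, mul_add, h4,
    hE.sum_trace_mul_pderiv_trProd, map_add, map_sum, map_multiset_sum, Multiset.map_map]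
  congr 3
  funext a
  simp only [Function.comp_apply, ← MvPolynomial.smul_eq_C_mul, map_smul, smul_eq_mul]
  simp only [trProd, Multiset.map_cons, Multiset.prod_cons]

end SchwingerDyson

section TraceMoments

/-- The recursion satisfied by the mixed moments of traces of a GUE matrix of size `ν`. -/
structure IsTraceMoment (ν : ℕ) (M : Multiset ℕ → ℂ) : Prop where
  zero : M 0 = 1
  cons_zero : ∀ s, M (0 ::ₘ s) = M s
  cons_succ : ∀ k s, M ((k + 1) ::ₘ s) =
    ∑ j ∈ Finset.range k, M (j ::ₘ (k - 1 - j) ::ₘ s) +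
      (s.map fun a : ℕ => (a : ℂ) / (ν : ℂ) ^ 2 * M ((k + a - 1) ::ₘ s.erase a)).sum

lemma IsGUEFamily.isTraceMoment {ι : Type*} [Fintype ι] {N : Type*} [Fintype N] [DecidableEq N]
    [Nonempty N] {E : ι → Matrix N N ℂ} (hE : IsGUEFamily E) :
    IsTraceMoment (Fintype.card N) fun s => gaussExp (trProd E s) where
  zero := by simp [trProd, gaussExp_one]
  cons_zero s := by simp [trProd, trPow_zero]
  cons_succ := hE.schwinger_dyson

/-- Induction along the recursion for trace moments. -/
lemma traceMoment_induction {Q : Multiset ℕ → Prop} (zero : Q 0)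
    (cons_zero : ∀ s, Q s → Q (0 ::ₘ s))
    (cons_succ : ∀ k s, (∀ t : Multiset ℕ, t.sum + 2 = k + 1 + s.sum → Q t) → Q ((k + 1) ::ₘ s))
    (s : Multiset ℕ) : Q s := by
  suffices h : ∀ n (s : Multiset ℕ), s.sum = n → Q s from h _ s rfl
  intro n
  induction n using Nat.strong_induction_on with
  | _ n ih =>
    intro s
    induction s using Multiset.induction with
    | empty => exact fun _ => zero
    | cons a s ihs =>
      intro hs
      rw [Multiset.sum_cons] at hs
      rcases a with _ | k
      · exact cons_zero s (ihs (by omega))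
      · exact cons_succ k s fun t ht => ih t.sum (by omega) t rfl

lemma sum_mul_le_of_forall_le {s : Multiset ℕ} {f : ℕ → ℝ} {c : ℝ}
    (h : ∀ a ∈ s, f a ≤ a * c) : (s.map f).sum ≤ s.sum * c := by
  induction s using Multiset.induction with
  | empty => simp
  | cons a s ih =>
    simp only [Multiset.map_cons, Multiset.sum_cons, Nat.cast_add, add_mul]
    exact add_le_add (h a (Multiset.mem_cons_self a s))
      (ih fun b hb => h b (Multiset.mem_cons_of_mem hb))

lemma norm_multiset_sum_map_le (s : Multiset ℕ) (f : ℕ → ℂ) :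
    ‖(s.map f).sum‖ ≤ (s.map fun a => ‖f a‖).sum := by
  simpa using norm_multiset_sum_le (s.map f)

lemma multiset_prod_map_pos {s : Multiset ℕ} {f : ℕ → ℝ} (h : ∀ a, 0 < f a) :
    0 < (s.map f).prod := by
  induction s using Multiset.induction with
  | empty => simp
  | cons a s ih => simpa using mul_pos (h a) ih

lemma IsTraceMoment.norm_le {ν : ℕ} {M : Multiset ℕ → ℂ} (hM : IsTraceMoment ν M)
    {f g : ℕ → ℝ} (hf0 : f 0 = 1) (hf : ∀ a, 0 < f a) {K : ℕ} (hK : 0 < K)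
    (hg : ∀ k, 0 ≤ g k)
    (hfg : ∀ k, f (k + 1) = g (k + 1) + ∑ j ∈ Finset.range k, f j * f (k - 1 - j))
    (h : ∀ k a, k + 1 + a ≤ K → 0 < a → K / (ν : ℝ) ^ 2 * f (k + a - 1) ≤ g (k + 1) * f a)
    (s : Multiset ℕ) : s.sum ≤ K → ‖M s‖ ≤ (s.map f).prod := by
  induction s using traceMoment_induction with
  | zero => intro _; simp [hM.zero]
  | cons_zero s ih =>
    intro hs
    simpa [hM.cons_zero, hf0] using ih (by simpa using hs)
  | cons_succ k s ih =>
    intro hs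
    rw [Multiset.sum_cons] at hs
    have hp := multiset_prod_map_pos (s := s) hf
    rw [hM.cons_succ, Multiset.map_cons, Multiset.prod_cons, hfg, add_mul, add_comm (g _ * _),
      Finset.sum_mul]
    refine (norm_add_le _ _).trans (add_le_add ((norm_sum_le _ _).trans
      (Finset.sum_le_sum fun j hj => ?_)) ?_)
    · have hj' := Finset.mem_range.1 hj
      refine (ih _ (by simp; omega) (by simp; omega)).trans (le_of_eq ?_)
      simp [mul_assoc]
    · refine (norm_multiset_sum_map_le _ _).trans ?_
      have key : ∀ a ∈ s, ‖(a : ℂ) / (ν : ℂ) ^ 2 * M ((k + a - 1) ::ₘ s.erase a)‖ ≤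
          a * (g (k + 1) * (s.map f).prod / K) := by
        intro a ha
        rcases Nat.eq_zero_or_pos a with rfl | ha0
        · simp
        have hsum : a + (s.erase a).sum = s.sum := Multiset.sum_erase ha
        have hprod : f a * ((s.erase a).map f).prod = (s.map f).prod := Multiset.prod_map_erase ha
        have hih := ih ((k + a - 1) ::ₘ s.erase a) (by simp; omega) (by simp; omega)
        rw [Multiset.map_cons, Multiset.prod_cons] at hih
        have hh := h k a (by omega) ha0
        have hpe := multiset_prod_map_pos (s := s.erase a) hf
        have hK' : (0 : ℝ) < K := by exact_mod_cast hK
        rw [norm_mul, norm_div, norm_pow, Complex.norm_natCast, Complex.norm_natCast, div_mul_eq_mul_div,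
          mul_div_assoc]
        refine mul_le_mul_of_nonneg_left ?_ (Nat.cast_nonneg a)
        rw [le_div_iff₀ hK']
        calc _ ≤ (f (k + a - 1) * ((s.erase a).map f).prod) / (ν : ℝ) ^ 2 * K := by gcongr
          _ = (K / (ν : ℝ) ^ 2 * f (k + a - 1)) * ((s.erase a).map f).prod := by ring
          _ ≤ (g (k + 1) * f a) * ((s.erase a).map f).prod := by gcongr
          _ = _ := by rw [mul_assoc, hprod]
      refine (sum_mul_le_of_forall_le key).trans ?_
      have hK' : (0 : ℝ) < K := by exact_mod_cast hK
      rw [mul_div_assoc', div_le_iff₀ hK', mul_comm]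
      refine mul_le_mul_of_nonneg_left ?_ (mul_nonneg (hg _) hp.le)
      exact_mod_cast (by omega : s.sum ≤ K)

/-- A majorant for the moments of the semicircular distribution, with a perturbation of size `δ`. -/
def semicircleMajorant (δ : ℝ) : ℕ → ℝ
  | 0 => 1
  | k + 1 => δ * 2 ^ (k + 1) +
      ∑ j : Fin k, semicircleMajorant δ j * semicircleMajorant δ (k - 1 - j)

lemma semicircleMajorant_zero (δ : ℝ) : semicircleMajorant δ 0 = 1 := by
  rw [semicircleMajorant]

lemma semicircleMajorant_succ (δ : ℝ) (k : ℕ) : semicircleMajorant δ (k + 1) = δ * 2 ^ (k + 1) +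
    ∑ j ∈ Finset.range k, semicircleMajorant δ j * semicircleMajorant δ (k - 1 - j) := by
  rw [semicircleMajorant, Finset.sum_range
    (fun j => semicircleMajorant δ j * semicircleMajorant δ (k - 1 - j))]

lemma semicircleMajorant_pos {δ : ℝ} (hδ : 0 < δ) (k : ℕ) : 0 < semicircleMajorant δ k := by
  induction k using Nat.strong_induction_on with
  | _ k ih =>
    rcases k with _ | k
    · simp [semicircleMajorant_zero]
    rw [semicircleMajorant_succ]
    refine add_pos_of_pos_of_nonneg (by positivity) (Finset.sum_nonneg fun j hj => ?_)
    have := Finset.mem_range.1 hj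
    exact mul_nonneg (ih _ (by omega)).le (ih _ (by omega)).le

lemma le_semicircleMajorant {δ : ℝ} (hδ : 0 < δ) (k : ℕ) (hk : 0 < k) :
    δ * 2 ^ k ≤ semicircleMajorant δ k := by
  obtain ⟨k, rfl⟩ : ∃ j, k = j + 1 := ⟨k - 1, by omega⟩
  rw [semicircleMajorant_succ]
  exact le_add_of_nonneg_right (Finset.sum_nonneg fun j _ =>
    mul_nonneg (semicircleMajorant_pos hδ _).le (semicircleMajorant_pos hδ _).le)

lemma sum_convolution_le {u : ℕ → ℝ} (hu : ∀ k, 0 ≤ u k) (n : ℕ) :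
    ∑ k ∈ Finset.range n, ∑ j ∈ Finset.range k, u j * u (k - 1 - j) ≤
      (∑ k ∈ Finset.range n, u k) ^ 2 := by
  have h : ∑ k ∈ Finset.range n, ∑ j ∈ Finset.range k, u j * u (k - 1 - j) =
      ∑ j ∈ Finset.range n, ∑ k ∈ Finset.Ico (j + 1) n, u j * u (k - 1 - j) := by
    refine Finset.sum_comm' fun k j => ?_
    simp only [Finset.mem_range, Finset.mem_Ico]
    omega
  rw [h, sq, Finset.sum_mul]
  refine Finset.sum_le_sum fun j _ => ?_
  rw [← Finset.mul_sum, Finset.sum_Ico_eq_sum_range]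
  refine mul_le_mul_of_nonneg_left ?_ (hu j)
  calc _ = ∑ i ∈ Finset.range (n - (j + 1)), u i :=
        Finset.sum_congr rfl fun i _ => congrArg u (by omega)
    _ ≤ _ := Finset.sum_le_sum_of_subset_of_nonneg
        (Finset.range_subset_range.2 (by omega)) fun i _ _ => hu i

lemma semicircleMajorant_le {r : ℝ} (hr : 1 < r) (k : ℕ) :
    semicircleMajorant ((r - 1) * (1 - (r⁻¹) ^ 2)) k ≤ 2 * (2 * r) ^ k := by
  set δ := (r - 1) * (1 - (r⁻¹) ^ 2) with hδ
  have hr0 : 0 < r := by linarith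
  have hi1 : r⁻¹ < 1 := inv_lt_one_of_one_lt₀ hr
  have hi0 : 0 < r⁻¹ := inv_pos.2 hr0
  have hδ0 : 0 < δ := mul_pos (by linarith) (by nlinarith)
  set z := (2 * r)⁻¹ with hz
  have hz0 : 0 < z := by positivity
  have h2z : 2 * z = r⁻¹ := by rw [hz, mul_inv]; ring
  set u : ℕ → ℝ := fun k => semicircleMajorant δ k * z ^ k with hu
  have hu0 : ∀ k, 0 ≤ u k := fun k =>
    mul_nonneg (semicircleMajorant_pos hδ0 k).le (by positivity)
  have hsum : ∀ n, ∑ k ∈ Finset.range n, u k ≤ 2 := by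
    intro n
    induction n with
    | zero => simp
    | succ n ih =>
      rw [Finset.sum_range_succ']
      have h1 : ∀ k, u (k + 1) = δ * (r⁻¹ * r⁻¹ ^ k) +
          z ^ 2 * ∑ j ∈ Finset.range k, u j * u (k - 1 - j) := by
        intro k
        simp only [hu]
        rw [semicircleMajorant_succ, add_mul, mul_assoc, ← mul_pow, h2z, pow_succ', Finset.sum_mul,
          Finset.mul_sum]
        congr 1
        refine Finset.sum_congr rfl fun j hj => ?_
        have hk : k + 1 = j + (k - 1 - j) + 2 := by
          have := Finset.mem_range.1 hj
          omega
        rw [hk, pow_add, pow_add]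
        ring
      simp only [h1]
      rw [Finset.sum_add_distrib, ← Finset.mul_sum, ← Finset.mul_sum, ← Finset.mul_sum]
      have hg : ∑ k ∈ Finset.range n, r⁻¹ ^ k ≤ (1 - r⁻¹)⁻¹ := by
        rw [← tsum_geometric_of_lt_one hi0.le hi1]
        exact (summable_geometric_of_lt_one hi0.le hi1).sum_le_tsum _ fun i _ => by positivity
      have hg2 : δ * (r⁻¹ * (1 - r⁻¹)⁻¹) = 1 - r⁻¹ ^ 2 := by
        have : r - 1 ≠ 0 := by linarith
        have h3 : r⁻¹ * (1 - r⁻¹)⁻¹ = (r - 1)⁻¹ := by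
          rw [← mul_inv, mul_sub, mul_one, mul_inv_cancel₀ hr0.ne']
        rw [h3, hδ]
        field_simp
      have hc := sum_convolution_le hu0 n
      have hS0 : 0 ≤ ∑ k ∈ Finset.range n, u k := Finset.sum_nonneg fun k _ => hu0 k
      have hzz : z ^ 2 * 4 = r⁻¹ ^ 2 := by rw [← h2z]; ring
      have hb1 : δ * (r⁻¹ * ∑ k ∈ Finset.range n, r⁻¹ ^ k) ≤ 1 - r⁻¹ ^ 2 := by
        rw [← hg2]; gcongr
      have hb2 : z ^ 2 * ∑ k ∈ Finset.range n, ∑ j ∈ Finset.range k, u j * u (k - 1 - j) ≤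
          r⁻¹ ^ 2 := by
        rw [← hzz]
        refine mul_le_mul_of_nonneg_left (hc.trans ?_) (by positivity)
        nlinarith
      have hu00 : u 0 = 1 := by simp [hu, semicircleMajorant_zero]
      rw [hu00]
      linarith
  have hk : u k ≤ 2 := (Finset.single_le_sum (fun i _ => hu0 i)
    (Finset.mem_range.2 (Nat.lt_succ_self k))).trans (hsum (k + 1))
  simp only [hu, hz, inv_pow] at hk
  rwa [mul_inv_le_iff₀ (by positivity)] at hk

/-- High moments of a GUE matrix of size `ν` decay fast after normalization by `2 + ε`. -/
lemma exists_moment_decay {ε : ℝ} (hε : 0 < ε) :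
    ∃ ν₀ : ℕ, ∀ ν : ℕ, ν₀ ≤ ν → 0 < ν → ∃ p : ℕ, ∀ M, IsTraceMoment ν M →
      ν * ‖M {2 * p}‖ ≤ 2 / (ν : ℝ) ^ 2 * (2 * (1 + ε)) ^ (2 * p) := by
  obtain ⟨r, hr, hr7⟩ : ∃ r : ℝ, 1 < r ∧ r ^ 7 ≤ 1 + ε := by
    have hc : Tendsto (fun r : ℝ => r ^ 7) (𝓝[>] 1) (𝓝 (1 ^ 7)) :=
      ((continuous_pow 7).tendsto 1).mono_left nhdsWithin_le_nhds
    have h1 := hc.eventually_le_const (by linarith : (1 : ℝ) ^ 7 < 1 + ε)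
    obtain ⟨r, hr, hr'⟩ := (h1.and self_mem_nhdsWithin).exists
    exact ⟨r, hr', hr⟩
  have hr0 : 0 < r := by linarith
  set δ := (r - 1) * (1 - (r⁻¹) ^ 2) with hδ
  have hi1 : r⁻¹ < 1 := inv_lt_one_of_one_lt₀ hr
  have hi0 : 0 < r⁻¹ := inv_pos.2 hr0
  have hr1 : 0 < r - 1 := by linarith
  have hδ0 : 0 < δ := mul_pos hr1 (by nlinarith)
  obtain ⟨ν₀, hν₀⟩ := exists_nat_ge (2 / (r - 1) * r ^ 4 / δ ^ 2)
  refine ⟨ν₀, fun ν hν hν1 => ?_⟩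
  have hν' : (0 : ℝ) < ν := by exact_mod_cast hν1
  have hν1' : (1 : ℝ) ≤ ν := by exact_mod_cast hν1
  obtain ⟨n, hn1, hn2⟩ := exists_nat_pow_near hν1' (one_lt_pow₀ hr (by norm_num : 4 ≠ 0))
  refine ⟨n + 1, fun M hM => ?_⟩
  set K := 2 * (n + 1) with hKdef
  have hrK : r ^ (2 * K) = (r ^ 4) ^ (n + 1) := by rw [← pow_mul, hKdef]; congr 1; ring
  have hrK1 : (ν : ℝ) < r ^ (2 * K) := hrK ▸ hn2
  have hrK2 : r ^ (2 * K) ≤ r ^ 4 * ν := by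
    rw [hrK, pow_succ']; gcongr
  have hbern : (K : ℝ) * (r - 1) ≤ r ^ K := by
    have := one_add_mul_sub_le_pow (by linarith : -1 ≤ r) K
    linarith
  have hKr : 2 * K * r ^ K ≤ δ ^ 2 * ν ^ 2 := by
    have h1 : 2 * K * r ^ K ≤ 2 / (r - 1) * r ^ (2 * K) := by
      have : (K : ℝ) ≤ r ^ K / (r - 1) := by rwa [le_div_iff₀ hr1]
      calc 2 * K * r ^ K ≤ 2 * (r ^ K / (r - 1)) * r ^ K := by gcongr
        _ = _ := by rw [two_mul K, pow_add]; ring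
    have h2 : 2 / (r - 1) * r ^ 4 ≤ δ ^ 2 * ν := by
      rw [div_le_iff₀ (by positivity)] at hν₀
      have : (ν₀ : ℝ) ≤ ν := by exact_mod_cast hν
      nlinarith [sq_nonneg δ]
    calc 2 * K * r ^ K ≤ 2 / (r - 1) * r ^ (2 * K) := h1
      _ ≤ 2 / (r - 1) * (r ^ 4 * ν) := by gcongr
      _ = 2 / (r - 1) * r ^ 4 * ν := by ring
      _ ≤ δ ^ 2 * ν * ν := by gcongr
      _ = _ := by ring
  have hb := hM.norm_le (f := semicircleMajorant δ) (g := fun k => δ * 2 ^ k)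
    (semicircleMajorant_zero δ) (semicircleMajorant_pos hδ0) (K := K) (by omega)
    (fun k => by positivity) (semicircleMajorant_succ δ) (by
      intro k a hka ha
      have h1 := semicircleMajorant_le hr (k + a - 1)
      have h2 := le_semicircleMajorant hδ0 a ha
      have h3 : (2 * r) ^ (k + a - 1) ≤ 2 ^ (k + 1 + a) * r ^ K := by
        rw [mul_pow]
        gcongr
        · norm_num
        · omega
        · exact hr.le
        · omega
      rw [div_mul_eq_mul_div, div_le_iff₀ (by positivity)]
      calc K * semicircleMajorant δ (k + a - 1) ≤ K * (2 * (2 ^ (k + 1 + a) * r ^ K)) := by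
            gcongr; exact h1.trans (by gcongr)
        _ = (2 * K * r ^ K) * 2 ^ (k + 1 + a) := by ring
        _ ≤ (δ ^ 2 * ν ^ 2) * 2 ^ (k + 1 + a) := by gcongr
        _ = δ * 2 ^ (k + 1) * (δ * 2 ^ a) * ν ^ 2 := by rw [pow_add _ (k + 1)]; ring
        _ ≤ _ := by gcongr) {K} (by simp)
  rw [Multiset.map_singleton, Multiset.prod_singleton] at hb
  have hb2 := hb.trans (semicircleMajorant_le hr K)
  have h6 : (ν : ℝ) ^ 3 ≤ r ^ (6 * K) := by
    rw [show 6 * K = 2 * K * 3 by ring, pow_mul _ (2 * K)]; gcongr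
  have h7 : r ^ (6 * K) * r ^ K ≤ (1 + ε) ^ K := by
    rw [← pow_add, show 6 * K + K = 7 * K by ring, pow_mul]; gcongr
  rw [div_mul_eq_mul_div, le_div_iff₀ (by positivity)]
  calc ν * ‖M {K}‖ * (ν : ℝ) ^ 2 ≤ ν * (2 * (2 * r) ^ K) * (ν : ℝ) ^ 2 := by gcongr
    _ = 2 * 2 ^ K * (ν ^ 3 * r ^ K) := by rw [mul_pow]; ring
    _ ≤ 2 * 2 ^ K * (r ^ (6 * K) * r ^ K) := by gcongr
    _ ≤ 2 * 2 ^ K * (1 + ε) ^ K := by gcongr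
    _ = _ := by rw [mul_pow]; ring

/-- The moments of the standard semicircular distribution, defined by their recursion. -/
def semicircleMoment : ℕ → ℝ
  | 0 => 1
  | k + 1 => ∑ j : Fin k, semicircleMoment j * semicircleMoment (k - 1 - j)

lemma semicircleMoment_zero : semicircleMoment 0 = 1 := by
  rw [semicircleMoment]

lemma semicircleMoment_succ (k : ℕ) : semicircleMoment (k + 1) =
    ∑ j ∈ Finset.range k, semicircleMoment j * semicircleMoment (k - 1 - j) := by
  rw [semicircleMoment, Finset.sum_range
    (fun j => semicircleMoment j * semicircleMoment (k - 1 - j))]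

/-- The mixed trace moments of GUE matrices factor asymptotically into semicircular moments. -/
lemma exists_traceMoment_bound (s : Multiset ℕ) : ∃ C : ℝ, ∀ ν : ℕ, 0 < ν → ∀ M,
    IsTraceMoment ν M →
      ‖M s - (((s.map semicircleMoment).prod : ℝ) : ℂ)‖ ≤ C / (ν : ℝ) ^ 2 := by
  induction s using traceMoment_induction with
  | zero => exact ⟨0, fun ν _ M hM => by simp [hM.zero]⟩
  | cons_zero s ih =>
    obtain ⟨C, hC⟩ := ih
    refine ⟨C, fun ν hν M hM => ?_⟩
    simpa [hM.cons_zero, semicircleMoment_zero] using hC ν hν M hM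
  | cons_succ k s ih =>
    choose! C hC using ih
    set c : Multiset ℕ → ℝ := fun t => (t.map semicircleMoment).prod with hc
    refine ⟨∑ j ∈ Finset.range k, C (j ::ₘ (k - 1 - j) ::ₘ s) + (s.map fun a : ℕ => a *
      (|C ((k + a - 1) ::ₘ s.erase a)| + |c ((k + a - 1) ::ₘ s.erase a)|)).sum,
      fun ν hν M hM => ?_⟩
    have hν' : (1 : ℝ) ≤ ν := by exact_mod_cast hν
    have hν2 : (1 : ℝ) ≤ (ν : ℝ) ^ 2 := one_le_pow₀ hν'
    have e1 : ((((k + 1) ::ₘ s).map semicircleMoment).prod : ℝ) =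
        ∑ j ∈ Finset.range k, c (j ::ₘ (k - 1 - j) ::ₘ s) := by
      rw [Multiset.map_cons, Multiset.prod_cons, semicircleMoment_succ, Finset.sum_mul]
      simp [hc, mul_assoc]
    rw [hM.cons_succ, e1, Complex.ofReal_sum, add_sub_right_comm, ← Finset.sum_sub_distrib, add_div]
    refine (norm_add_le _ _).trans (add_le_add ?_ ?_)
    · rw [Finset.sum_div]
      refine (norm_sum_le _ _).trans (Finset.sum_le_sum fun j hj => ?_)
      have hj' := Finset.mem_range.1 hj
      exact hC _ (by simp; omega) ν hν M hM
    · refine (norm_multiset_sum_map_le _ _).trans ?_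
      rw [div_eq_mul_inv, ← Multiset.sum_map_mul_right]
      refine Multiset.sum_map_le_sum_map _ _ fun a ha => ?_
      rcases Nat.eq_zero_or_pos a with rfl | ha0
      · simp
      have hsum : a + (s.erase a).sum = s.sum := Multiset.sum_erase ha
      have h1 := hC ((k + a - 1) ::ₘ s.erase a) (by simp; omega) ν hν M hM
      have h2 : ‖M ((k + a - 1) ::ₘ s.erase a)‖ ≤ |C ((k + a - 1) ::ₘ s.erase a)| +
          |c ((k + a - 1) ::ₘ s.erase a)| := by
        have h3 := norm_sub_norm_le (M ((k + a - 1) ::ₘ s.erase a))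
          ((c ((k + a - 1) ::ₘ s.erase a) : ℝ) : ℂ)
        have h4 : C ((k + a - 1) ::ₘ s.erase a) / (ν : ℝ) ^ 2 ≤
            |C ((k + a - 1) ::ₘ s.erase a)| :=
          (div_le_div_of_nonneg_right (le_abs_self _) (by positivity)).trans
            (div_le_self (abs_nonneg _) hν2)
        have h5 := h1.trans h4
        rw [Complex.norm_real, Real.norm_eq_abs] at h3
        linarith
      rw [norm_mul, norm_div, norm_pow, Complex.norm_natCast, Complex.norm_natCast]
      calc _ ≤ (a : ℝ) / (ν : ℝ) ^ 2 * (|C ((k + a - 1) ::ₘ s.erase a)| +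
          |c ((k + a - 1) ::ₘ s.erase a)|) := by gcongr
        _ = _ := by ring

end TraceMoments

section HermitianSpectrum

open scoped Matrix.Norms.L2Operator

variable {N : Type*} [Fintype N] [DecidableEq N]

/-- The real part of the normalized trace. -/
def ntr (X : Matrix N N ℂ) : ℝ := X.trace.re / Fintype.card N

lemma Matrix.IsHermitian.eq_conj_diagonal {A : Matrix N N ℂ} (hA : A.IsHermitian) :
    A = hA.eigenvectorUnitary * diagonal (fun i => (hA.eigenvalues i : ℂ)) *
      star (hA.eigenvectorUnitary : Matrix N N ℂ) := by
  conv_lhs => rw [hA.spectral_theorem]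
  rfl

lemma unitary_conj_pow {U : Matrix N N ℂ} (hU : U ∈ unitary (Matrix N N ℂ)) (D : Matrix N N ℂ)
    (k : ℕ) :
    (U * D * star U) ^ k = U * D ^ k * star U := by
  induction k with
  | zero => simp [(Unitary.mem_iff.1 hU).2]
  | succ k ih =>
    rw [pow_succ, ih, pow_succ]
    have : U * D ^ k * star U * (U * D * star U) = U * D ^ k * (star U * U) * D * star U := by
      noncomm_ring
    rw [this, (Unitary.mem_iff.1 hU).1]
    noncomm_ring

lemma trace_unitary_conj_pow {U : Matrix N N ℂ} (hU : U ∈ unitary (Matrix N N ℂ)) (D : Matrix N N ℂ)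
    (k : ℕ) : ((U * D * star U) ^ k).trace = (D ^ k).trace := by
  rw [unitary_conj_pow hU, Matrix.trace_mul_comm, ← mul_assoc, (Unitary.mem_iff.1 hU).1, one_mul]

lemma norm_conj {U : Matrix N N ℂ} (hU : U ∈ unitary (Matrix N N ℂ)) (D : Matrix N N ℂ) :
    ‖U * D * star U‖ = ‖D‖ := by
  have h1 := CStarRing.norm_mul_mem_unitary (U * D) (Unitary.star_mem hU)
  rw [h1, CStarRing.norm_mem_unitary_mul _ hU]

lemma Matrix.IsHermitian.trace_pow {A : Matrix N N ℂ} (hA : A.IsHermitian) (k : ℕ) :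
    (A ^ k).trace = ((∑ i, hA.eigenvalues i ^ k : ℝ) : ℂ) := by
  conv_lhs => rw [hA.eq_conj_diagonal]
  rw [trace_unitary_conj_pow hA.eigenvectorUnitary.2, diagonal_pow, trace_diagonal]
  simp

lemma Matrix.IsHermitian.norm_eq {A : Matrix N N ℂ} (hA : A.IsHermitian) :
    ‖A‖ = ‖hA.eigenvalues‖ := by
  conv_lhs => rw [hA.eq_conj_diagonal]
  rw [norm_conj hA.eigenvectorUnitary.2, l2_opNorm_diagonal]
  simp [Pi.norm_def]

lemma Matrix.IsHermitian.ntr_pow {A : Matrix N N ℂ} (hA : A.IsHermitian) (k : ℕ) :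
    ntr (A ^ k) = (∑ i, hA.eigenvalues i ^ k) / Fintype.card N := by
  rw [ntr, hA.trace_pow, Complex.ofReal_re]

lemma Matrix.IsHermitian.norm_pow_le {A : Matrix N N ℂ} (hA : A.IsHermitian) [Nonempty N] (p : ℕ) :
    ‖A‖ ^ (2 * p) ≤ Fintype.card N * ntr (A ^ (2 * p)) := by
  have hc : (Fintype.card N : ℝ) ≠ 0 := by simp
  rw [hA.ntr_pow, mul_div_cancel₀ _ hc, hA.norm_eq]
  obtain ⟨i, hi⟩ := Finite.exists_max fun i => ‖hA.eigenvalues i‖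
  rw [le_antisymm ((pi_norm_le_iff_of_nonneg (norm_nonneg _)).2 hi) (norm_le_pi_norm _ i),
    Real.norm_eq_abs, pow_mul, sq_abs, ← pow_mul]
  exact Finset.single_le_sum (f := fun i => hA.eigenvalues i ^ (2 * p))
    (fun i _ => by simp only [pow_mul]; positivity) (Finset.mem_univ i)

end HermitianSpectrum

section GUEConcentration

open scoped Matrix.Norms.L2Operator

set_option linter.unusedSectionVars false

variable {ι : Type*} [Fintype ι] {N : Type*} [Fintype N] [DecidableEq N]

/-- The value `∑ g_α E_α` of the Gaussian matrix with coefficient family `E` at `g`. -/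
def gueMat (E : ι → Matrix N N ℂ) (g : ι → ℝ) : Matrix N N ℂ := ∑ α, (g α : ℂ) • E α

lemma continuous_gueMat (E : ι → Matrix N N ℂ) : Continuous (gueMat E) := by
  unfold gueMat
  fun_prop

variable {E : ι → Matrix N N ℂ}

lemma IsGUEFamily.isHermitian_gueMat (hE : IsGUEFamily E) (g : ι → ℝ) :
    (gueMat E g).IsHermitian := by
  unfold gueMat
  refine isSelfAdjoint_sum _ fun α _ => ?_
  have := hE.isHermitian α
  simp [IsSelfAdjoint, star_eq_conjTranspose, this.eq]

lemma polyMat_map_realEval (E : ι → Matrix N N ℂ) (g : ι → ℝ) :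
    (realEval g).mapMatrix (polyMat E) = gueMat E g := by
  rw [polyMat, map_sum, gueMat]
  refine Finset.sum_congr rfl fun α _ => ?_
  ext i j
  simp [constMat, realEval]

lemma realEval_trPow (E : ι → Matrix N N ℂ) (g : ι → ℝ) (k : ℕ) :
    realEval g (trPow E k) = (Fintype.card N : ℂ)⁻¹ * (gueMat E g ^ k).trace := by
  rw [trPow, map_mul, ← polyMat_map_realEval, ← map_pow]
  simp [Matrix.trace, realEval]

lemma IsGUEFamily.realEval_trPow (hE : IsGUEFamily E) (g : ι → ℝ) (k : ℕ) :
    realEval g (trPow E k) = (ntr (gueMat E g ^ k) : ℂ) := by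
  rw [_root_.realEval_trPow, ntr, (hE.isHermitian_gueMat g).trace_pow, Complex.ofReal_re]
  push_cast
  ring

lemma IsGUEFamily.realEval_trProd (hE : IsGUEFamily E) (g : ι → ℝ) (s : Multiset ℕ) :
    realEval g (trProd E s) = ((s.map fun k : ℕ => ntr (gueMat E g ^ k)).prod : ℝ) := by
  rw [trProd, map_multiset_prod, Multiset.map_map, ← Complex.ofRealHom_eq_coe, map_multiset_prod,
    Multiset.map_map]
  simp only [Function.comp_def, hE.realEval_trPow, Complex.ofRealHom_eq_coe]

lemma IsGUEFamily.integrable_prod_ntr (hE : IsGUEFamily E) (s : Multiset ℕ) :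
    Integrable (fun g => (s.map fun k : ℕ => ntr (gueMat E g ^ k)).prod) (gaussPi ι) := by
  have h := (integrable_realEval (trProd E s)).re
  simpa only [hE.realEval_trProd, RCLike.re_to_complex, Complex.ofReal_re] using h

lemma IsGUEFamily.gaussExp_trProd (hE : IsGUEFamily E) (s : Multiset ℕ) :
    gaussExp (trProd E s) =
      ((∫ g, (s.map fun k : ℕ => ntr (gueMat E g ^ k)).prod ∂(gaussPi ι) : ℝ) : ℂ) := by
  rw [gaussExp_apply, ← integral_complex_ofReal]
  simp only [hE.realEval_trProd]

/-- The operator norm of a normalized GUE matrix exceeds `2 (1 + ε)` with small probability. -/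
lemma exists_gue_norm_tail {ε : ℝ} (hε : 0 < ε) : ∃ C : ℝ, ∀ (ι N : Type) [Fintype ι] [Fintype N]
    [DecidableEq N] [Nonempty N] (E : ι → Matrix N N ℂ), IsGUEFamily E →
    (gaussPi ι).real {g | 2 * (1 + ε) ≤ ‖gueMat E g‖} ≤ C / (Fintype.card N : ℝ) ^ 2 := by
  obtain ⟨ν₀, h⟩ := exists_moment_decay hε
  refine ⟨max 2 ((ν₀ : ℝ) ^ 2), fun ι N _ _ _ _ E hE => ?_⟩
  have hc : (0 : ℝ) < Fintype.card N := by simp [Fintype.card_pos]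
  by_cases hν : ν₀ ≤ Fintype.card N
  · obtain ⟨p, hp⟩ := h _ hν Fintype.card_pos
    have h1 := hp _ hE.isTraceMoment
    have hi := hE.integrable_prod_ntr {2 * p}
    simp only [hE.gaussExp_trProd, Multiset.map_singleton, Multiset.prod_singleton,
      Complex.norm_real] at h1 hi
    have hpos : 0 < (2 * (1 + ε)) ^ (2 * p) := by positivity
    have h0 : ∀ g, ‖gueMat E g‖ ^ (2 * p) ≤ Fintype.card N * ntr (gueMat E g ^ (2 * p)) :=
      fun g => (hE.isHermitian_gueMat g).norm_pow_le p
    have hm := mul_meas_ge_le_integral_of_nonneg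
      (f := fun g => Fintype.card N * ntr (gueMat E g ^ (2 * p))) (μ := gaussPi ι)
      (Eventually.of_forall fun g => (pow_nonneg (norm_nonneg _) _).trans (h0 g))
      (hi.const_mul _) ((2 * (1 + ε)) ^ (2 * p))
    have hsub : (gaussPi ι).real {g | 2 * (1 + ε) ≤ ‖gueMat E g‖} ≤ (gaussPi ι).real
        {g | (2 * (1 + ε)) ^ (2 * p) ≤ Fintype.card N * ntr (gueMat E g ^ (2 * p))} :=
      measureReal_mono fun g hg =>
        (pow_le_pow_left₀ (by positivity) (by exact hg) (2 * p)).trans (h0 g)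
    rw [integral_const_mul] at hm
    have h2 : (2 * (1 + ε)) ^ (2 * p) *
        (gaussPi ι).real {g | 2 * (1 + ε) ≤ ‖gueMat E g‖} ≤
        (2 * (1 + ε)) ^ (2 * p) * (2 / (Fintype.card N : ℝ) ^ 2) := by
      calc _ ≤ _ := mul_le_mul_of_nonneg_left hsub hpos.le
        _ ≤ _ := hm
        _ ≤ _ := mul_le_mul_of_nonneg_left (Real.le_norm_self _) hc.le
        _ ≤ _ := h1
        _ = _ := mul_comm _ _
    exact (le_of_mul_le_mul_left h2 hpos).trans (by gcongr; exact le_max_left _ _)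
  · refine measureReal_le_one.trans ?_
    rw [le_div_iff₀ (by positivity), one_mul]
    refine le_trans ?_ (le_max_right _ _)
    have : (Fintype.card N : ℝ) ≤ ν₀ := by exact_mod_cast (not_le.1 hν).le
    gcongr

/-- Concentration of the normalized trace moments of a normalized GUE matrix. -/
lemma exists_gue_moment_tail (k : ℕ) {η : ℝ} (hη : 0 < η) : ∃ C : ℝ, ∀ (ι N : Type) [Fintype ι]
    [Fintype N] [DecidableEq N] [Nonempty N] (E : ι → Matrix N N ℂ), IsGUEFamily E →
    (gaussPi ι).real {g | η ≤ |ntr (gueMat E g ^ k) - semicircleMoment k|} ≤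
      C / (Fintype.card N : ℝ) ^ 2 := by
  obtain ⟨C₁, h1⟩ := exists_traceMoment_bound {k}
  obtain ⟨C₂, h2⟩ := exists_traceMoment_bound {k, k}
  set s := semicircleMoment k with hs
  refine ⟨(C₂ + 2 * |s| * C₁) / η ^ 2, fun ι N _ _ _ _ E hE => ?_⟩
  have h1' := h1 _ Fintype.card_pos _ hE.isTraceMoment
  have h2' := h2 _ Fintype.card_pos _ hE.isTraceMoment
  have i1 := hE.integrable_prod_ntr {k}
  have i2 := hE.integrable_prod_ntr {k, k}
  simp only [hE.gaussExp_trProd, Multiset.insert_eq_cons, Multiset.map_cons, Multiset.prod_cons,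
    Multiset.map_singleton, Multiset.prod_singleton, ← Complex.ofReal_sub, Complex.norm_real,
    ← hs] at h1' h2' i1 i2
  set T := fun g => ntr (gueMat E g ^ k)
  have e : (fun g => (T g - s) ^ 2) = fun g => T g * T g - (2 * s) * T g + s ^ 2 := by
    funext g; ring
  have hi : Integrable (fun g => (T g - s) ^ 2) (gaussPi ι) := by
    rw [e]; exact (i2.sub (i1.const_mul _)).add (integrable_const _)
  have hm := mul_meas_ge_le_integral_of_nonneg (Eventually.of_forall fun g => sq_nonneg (T g - s))
    hi (η ^ 2)
  have hI : ∫ g, (T g - s) ^ 2 ∂(gaussPi ι) = (∫ g, T g * T g ∂(gaussPi ι) - s * s) -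
      2 * s * (∫ g, T g ∂(gaussPi ι) - s) := by
    have i2' : Integrable (fun g => T g * T g) (gaussPi ι) := i2
    rw [e, integral_add (by exact i2'.sub (i1.const_mul _)) (integrable_const _),
      integral_sub i2' (i1.const_mul _), integral_const_mul]
    simp
    ring
  have hset : {g | η ≤ |T g - s|} = {g | η ^ 2 ≤ (T g - s) ^ 2} := by
    ext g
    simp only [Set.mem_ofPred_eq]
    rw [sq_le_sq, abs_of_pos hη]
  change (gaussPi ι).real {g | η ≤ |T g - s|} ≤ _
  rw [hset, div_div, mul_comm (η ^ 2), ← div_div, le_div_iff₀ (by positivity), mul_comm]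
  refine hm.trans ?_
  rw [hI, add_div, mul_div_assoc]
  refine (Real.le_norm_self _).trans ((norm_sub_le _ _).trans (add_le_add h2' ?_))
  rw [norm_mul, norm_mul, Real.norm_ofNat, Real.norm_eq_abs s]
  gcongr

end GUEConcentration

section GUEFamilies

open scoped Matrix.Norms.L2Operator

variable {ι : Type*} [Fintype ι]

lemma exists_isGUEFamily (N : Type) [Fintype N] [DecidableEq N] [Nonempty N] :
    ∃ E : N × N × Bool → Matrix N N ℂ, IsGUEFamily E := by
  set ν : ℝ := (Fintype.card N : ℝ) with hν
  have hν0 : 0 < ν := by simp [hν, Fintype.card_pos]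
  set c : ℂ := (((2 * √ν)⁻¹ : ℝ) : ℂ) with hc
  have hcc : c * c = (4 * (ν : ℂ))⁻¹ := by
    rw [hc, ← Complex.ofReal_mul, ← mul_inv]
    have : 2 * √ν * (2 * √ν) = 4 * ν := by nlinarith [Real.mul_self_sqrt hν0.le]
    rw [this]; push_cast; rfl
  have hstar : star c = c := by simp [hc]
  refine ⟨fun α => if α.2.2 then (c * Complex.I) • (single α.1 α.2.1 1 - single α.2.1 α.1 1)
    else c • (single α.1 α.2.1 1 + single α.2.1 α.1 1), fun α => ?_, fun i j k l => ?_⟩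
  · split_ifs
    · simp only [IsHermitian, conjTranspose_smul, conjTranspose_sub, conjTranspose_single, star_mul',
        hstar, star_one]
      simp [smul_sub]
      abel
    · simp only [IsHermitian, conjTranspose_smul, conjTranspose_add, conjTranspose_single, hstar,
        star_one]
      rw [add_comm]
  · have key : ∀ a b : N,
        ((c * Complex.I) • (single a b 1 - single b a 1) : Matrix N N ℂ) i j *
          ((c * Complex.I) • (single a b 1 - single b a 1) : Matrix N N ℂ) k l +
        (c • (single a b 1 + single b a 1) : Matrix N N ℂ) i j *
          (c • (single a b 1 + single b a 1) : Matrix N N ℂ) k l =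
        (2 * ν : ℂ)⁻¹ * ((single a b 1 : Matrix N N ℂ) i j * (single b a 1 : Matrix N N ℂ) k l +
          (single b a 1 : Matrix N N ℂ) i j * (single a b 1 : Matrix N N ℂ) k l) := by
      intro a b
      have h2 : (2 * ν : ℂ)⁻¹ = 2 * (c * c) := by
        rw [hcc, mul_inv, mul_inv]; norm_num; ring
      rw [h2]
      simp only [Matrix.smul_apply, Matrix.sub_apply, Matrix.add_apply, smul_eq_mul]
      generalize (single a b 1 : Matrix N N ℂ) i j = x
      generalize (single b a 1 : Matrix N N ℂ) k l = y
      generalize (single b a 1 : Matrix N N ℂ) i j = z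
      generalize (single a b 1 : Matrix N N ℂ) k l = w
      linear_combination (c * c * (x - z) * (w - y)) * Complex.I_mul_I
    rw [Fintype.sum_prod_type]
    simp only [Fintype.sum_prod_type, Fintype.sum_bool, if_true, Bool.false_eq_true, if_false, key]
    simp only [← Finset.mul_sum, Finset.sum_add_distrib]
    have s1 : ∑ a : N, ∑ b : N, (single a b 1 : Matrix N N ℂ) i j *
        (single b a 1 : Matrix N N ℂ) k l = if i = l ∧ j = k then 1 else 0 := by
      rw [Finset.sum_eq_single i, Finset.sum_eq_single j]
      · simp [single, and_comm]
      · intro b _ hb; simp [single, hb]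
      · simp
      · intro a _ ha; simp [single, ha]
      · simp
    have s2 : ∑ a : N, ∑ b : N, (single b a 1 : Matrix N N ℂ) i j *
        (single a b 1 : Matrix N N ℂ) k l = if i = l ∧ j = k then 1 else 0 := by
      rw [Finset.sum_comm, s1]
    rw [s1, s2]
    split_ifs
    · rw [hν]; push_cast; rw [mul_inv]; ring
    · simp

variable {N : Type*} [Fintype N] [DecidableEq N] {N' : Type*} [Fintype N'] [DecidableEq N']
  {E : ι → Matrix N N ℂ}

lemma IsGUEFamily.compression (hE : IsGUEFamily E) (A : Matrix N N' ℂ) (hA : Aᴴ * A = 1) (c : ℝ)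
    (hc : c ^ 2 * (Fintype.card N : ℝ)⁻¹ = (Fintype.card N' : ℝ)⁻¹) :
    IsGUEFamily fun α => (c : ℂ) • (Aᴴ * E α * A) where
  isHermitian α := by
    have h := isHermitian_conjTranspose_mul_mul A (hE.isHermitian α)
    simp [IsHermitian, h.eq, conjTranspose_smul]
  sum_mul i j k l := by
    have e : ∀ i j α, ((c : ℂ) • (Aᴴ * E α * A)) i j =
        c * ∑ a, ∑ b, star (A a i) * E α a b * A b j := by
      intro i j α
      simp only [Matrix.smul_apply, Matrix.mul_apply, conjTranspose_apply, smul_eq_mul, Finset.sum_mul]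
      rw [Finset.sum_comm]
    have h := sum_eq_of_covariance _ _ hE.sum_mul fun a b a' b' =>
      star (A a i) * A b j * star (A a' k) * A b' l
    have h2 : ∀ α, ((c : ℂ) • (Aᴴ * E α * A)) i j * ((c : ℂ) • (Aᴴ * E α * A)) k l =
        (c : ℂ) ^ 2 * ∑ a, ∑ b, ∑ a', ∑ b', E α a b * E α a' b' *
          (star (A a i) * A b j * star (A a' k) * A b' l) := by
      intro α
      rw [e, e, mul_mul_mul_comm, ← sq]
      congr 1
      rw [Finset.sum_mul]
      simp only [Finset.sum_mul _ _ (∑ _, _)]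
      simp only [Finset.mul_sum]
      refine Finset.sum_congr rfl fun a _ => Finset.sum_congr rfl fun b _ =>
        Finset.sum_congr rfl fun a' _ => Finset.sum_congr rfl fun b' _ => ?_
      ring
    have hent : ∀ x y, ∑ a, star (A a x) * A a y = if x = y then 1 else 0 := by
      intro x y
      have := congrFun (congrFun hA x) y
      simpa [mul_apply, one_apply] using this
    have h3 : ∑ a, ∑ b, star (A a i) * A b j * star (A b k) * A a l =
        (if i = l then 1 else 0) * (if k = j then 1 else 0) := by
      rw [← hent i l, ← hent k j, Finset.sum_mul_sum]
      refine Finset.sum_congr rfl fun a _ => Finset.sum_congr rfl fun b _ => ?_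
      ring
    simp only [h2]
    rw [← Finset.mul_sum, h, h3, ← mul_assoc]
    have hc' : (c : ℂ) ^ 2 * (Fintype.card N : ℂ)⁻¹ = (Fintype.card N' : ℂ)⁻¹ := by
      have := congrArg (fun x : ℝ => (x : ℂ)) hc
      push_cast at this
      exact this
    rw [hc']
    by_cases h1 : i = l <;> by_cases h2 : j = k <;> simp [h1, h2, eq_comm]

lemma norm_le_one_of_isometry (A : Matrix N N' ℂ) (hA : Aᴴ * A = 1) : ‖A‖ ≤ 1 := by
  have h := l2_opNorm_conjTranspose_mul_self A
  rw [hA, ← diagonal_one, l2_opNorm_diagonal] at h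
  have h2 : ‖(fun _ => 1 : N' → ℂ)‖ ≤ 1 := (pi_norm_le_iff_of_nonneg zero_le_one).2 (by simp)
  nlinarith [norm_nonneg A]

lemma norm_compression_le (A : Matrix N N' ℂ) (hA : Aᴴ * A = 1) (X : Matrix N N ℂ) :
    ‖Aᴴ * X * A‖ ≤ ‖X‖ := by
  have h1 := norm_le_one_of_isometry A hA
  calc ‖Aᴴ * X * A‖ ≤ ‖Aᴴ‖ * ‖X‖ * ‖A‖ :=
        (l2_opNorm_mul _ _).trans (mul_le_mul_of_nonneg_right (l2_opNorm_mul _ _) (norm_nonneg _))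
    _ ≤ 1 * ‖X‖ * 1 := by rw [l2_opNorm_conjTranspose]; gcongr
    _ = ‖X‖ := by ring

lemma IsGUEFamily.ptrans {n d : ℕ} {E : ι → Matrix (Fin n × Fin d) (Fin n × Fin d) ℂ}
    (hE : IsGUEFamily E) : IsGUEFamily fun α => ptrans (E α) where
  isHermitian α := by
    ext p q
    exact (hE.isHermitian α).apply _ _
  sum_mul p q r s := by
    simp only [_root_.ptrans, hE.sum_mul, Prod.ext_iff]
    congr 1
    apply propext
    tauto

lemma norm_ptrans_le {n d : ℕ} (X : Matrix (Fin n × Fin d) (Fin n × Fin d) ℂ) :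
    ‖ptrans X‖ ≤ (n : ℝ) ^ 2 * ‖X‖ := by
  set F : Fin n → Fin n → Matrix (Fin n × Fin d) (Fin n × Fin d) ℂ :=
    fun i j => single i j (1 : ℂ) ⊗ₖ (1 : Matrix (Fin d) (Fin d) ℂ) with hF
  have hsum : ptrans X = ∑ i, ∑ j, F i j * X * F i j := by
    ext p q
    simp only [Matrix.sum_apply]
    rw [Finset.sum_eq_single p.1, Finset.sum_eq_single q.1]
    · simp [hF, mul_apply, Fintype.sum_prod_type, single, one_apply, _root_.ptrans, ite_and]
    · intro j _ hj
      simp [hF, mul_apply, Fintype.sum_prod_type, single, one_apply, ite_and, hj]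
    · simp
    · intro i _ hi
      refine Finset.sum_eq_zero fun j _ => ?_
      simp [hF, mul_apply, single, one_apply, ite_and, hi]
    · simp
  have hFn : ∀ i j, ‖F i j‖ ≤ 1 := by
    intro i j
    have h := l2_opNorm_conjTranspose_mul_self (F i j)
    have h2 : (F i j)ᴴ * F i j = diagonal fun p => if p.1 = j then 1 else 0 := by
      rw [hF, conjTranspose_kronecker, ← mul_kronecker_mul, conjTranspose_single,
        single_mul_single_same, conjTranspose_one]
      ext p q
      simp only [kroneckerMap_apply, single_apply, Matrix.mul_one, one_apply, diagonal_apply,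
        Prod.ext_iff, star_one]
      grind
    rw [h2, l2_opNorm_diagonal] at h
    have h3 : ‖(fun p => if p.1 = j then 1 else 0 : Fin n × Fin d → ℂ)‖ ≤ 1 :=
      (pi_norm_le_iff_of_nonneg zero_le_one).2 fun p => by split_ifs <;> simp
    nlinarith [norm_nonneg (F i j)]
  have hterm : ∀ i j, ‖F i j * X * F i j‖ ≤ ‖X‖ := fun i j =>
    calc _ ≤ ‖F i j‖ * ‖X‖ * ‖F i j‖ := norm_mul₃_le
      _ ≤ 1 * ‖X‖ * 1 := by have := hFn i j; gcongr
      _ = ‖X‖ := by ring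
  rw [hsum]
  calc _ ≤ ∑ i : Fin n, ∑ j : Fin n, ‖X‖ := (norm_sum_le _ _).trans (Finset.sum_le_sum fun i _ =>
        (norm_sum_le _ _).trans (Finset.sum_le_sum fun j _ => hterm i j))
    _ = _ := by simp; ring

end GUEFamilies

section Semicircle

/-- The density of the standard semicircular distribution on `[-2, 2]`. -/
def semiDensity (x : ℝ) : ℝ := √(4 - x ^ 2) / (2 * Real.pi)

/-- Integration against the standard semicircular distribution. -/
def semiInt (f : ℝ → ℝ) : ℝ := ∫ x in (-2)..2, f x * semiDensity x

lemma continuous_semiDensity : Continuous semiDensity := by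
  unfold semiDensity; fun_prop

lemma semiDensity_nonneg (x : ℝ) : 0 ≤ semiDensity x := by
  unfold semiDensity; positivity

lemma integral_SC {m σ : ℝ} (hσ : 0 < σ) (f : ℝ → ℝ) :
    ∫ x, f x ∂(SC m σ) = semiInt fun x => f (m + σ * x) := by
  have hmeas : Measurable (Set.indicator (Set.Icc (m - 2 * σ) (m + 2 * σ))
      (fun y => Real.sqrt (4 * σ ^ 2 - (y - m) ^ 2) / (2 * Real.pi * σ ^ 2))) :=
    (by fun_prop : Measurable _).indicator measurableSet_Icc
  rw [SC, integral_withDensity_eq_integral_toReal_smul hmeas.ennreal_ofReal (by simp)]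
  have e : ∀ x, (ENNReal.ofReal (Set.indicator (Set.Icc (m - 2 * σ) (m + 2 * σ))
      (fun y => Real.sqrt (4 * σ ^ 2 - (y - m) ^ 2) / (2 * Real.pi * σ ^ 2)) x)).toReal • f x =
      Set.indicator (Set.Icc (m - 2 * σ) (m + 2 * σ))
        (fun y => f y * (Real.sqrt (4 * σ ^ 2 - (y - m) ^ 2) / (2 * Real.pi * σ ^ 2))) x := by
    intro x
    rw [ENNReal.toReal_ofReal (Set.indicator_nonneg (fun y _ => by positivity) x), smul_eq_mul,
      mul_comm, ← Set.indicator_mul_right]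
  simp only [e]
  rw [integral_indicator measurableSet_Icc, integral_Icc_eq_integral_Ioc,
    ← intervalIntegral.integral_of_le (by linarith)]
  have h := intervalIntegral.integral_comp_add_mul (a := -2) (b := 2)
    (fun y => f y * (Real.sqrt (4 * σ ^ 2 - (y - m) ^ 2) / (2 * Real.pi * σ ^ 2))) hσ.ne' m
  rw [show m + σ * (-2) = m - 2 * σ by ring, show m + σ * 2 = m + 2 * σ by ring, smul_eq_mul,
    eq_comm, inv_mul_eq_iff_eq_mul₀ hσ.ne', ← intervalIntegral.integral_const_mul] at h
  rw [h, semiInt]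
  congr 1
  funext x
  have : √(4 * σ ^ 2 - (m + σ * x - m) ^ 2) = σ * √(4 - x ^ 2) := by
    rw [show 4 * σ ^ 2 - (m + σ * x - m) ^ 2 = σ ^ 2 * (4 - x ^ 2) by ring,
      Real.sqrt_mul (by positivity), Real.sqrt_sq hσ.le]
  rw [this, semiDensity]
  field_simp

lemma intervalIntegrable_mul_semiDensity {f : ℝ → ℝ} (hf : Continuous f) :
    IntervalIntegrable (fun x => f x * semiDensity x) volume (-2) 2 :=
  (hf.mul continuous_semiDensity).intervalIntegrable _ _

lemma semiInt_add {f g : ℝ → ℝ} (hf : Continuous f) (hg : Continuous g) :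
    semiInt (fun x => f x + g x) = semiInt f + semiInt g := by
  simp only [semiInt, add_mul]
  exact intervalIntegral.integral_add (intervalIntegrable_mul_semiDensity hf)
    (intervalIntegrable_mul_semiDensity hg)

lemma semiInt_sub {f g : ℝ → ℝ} (hf : Continuous f) (hg : Continuous g) :
    semiInt (fun x => f x - g x) = semiInt f - semiInt g := by
  simp only [semiInt, sub_mul]
  exact intervalIntegral.integral_sub (intervalIntegrable_mul_semiDensity hf)
    (intervalIntegrable_mul_semiDensity hg)

lemma semiInt_const_mul (c : ℝ) (f : ℝ → ℝ) : semiInt (fun x => c * f x) = c * semiInt f := by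
  simp only [semiInt, mul_assoc]
  exact intervalIntegral.integral_const_mul _ _

lemma semiInt_pos {f : ℝ → ℝ} (hf : Continuous f) (h0 : ∀ x, 0 ≤ f x)
    (h1 : ∃ c ∈ Set.Ioo (-2 : ℝ) 2, 0 < f c) : 0 < semiInt f := by
  obtain ⟨c, hc, hfc⟩ := h1
  refine intervalIntegral.integral_pos (by norm_num)
    (hf.mul continuous_semiDensity).continuousOn
    (fun x _ => mul_nonneg (h0 x) (semiDensity_nonneg x)) ⟨c, Set.Ioo_subset_Icc_self hc, ?_⟩
  refine mul_pos hfc (div_pos (Real.sqrt_pos.2 ?_) (by positivity))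
  nlinarith [hc.1, hc.2]

lemma hasDerivAt_cube_sqrt {x : ℝ} (hx : x ∈ Set.Ioo (-2 : ℝ) 2) :
    HasDerivAt (fun x : ℝ => (4 - x ^ 2) * √(4 - x ^ 2)) (-(3 * x * √(4 - x ^ 2))) x := by
  have h4 : 0 < 4 - x ^ 2 := by nlinarith [hx.1, hx.2]
  have hd : HasDerivAt (fun x : ℝ => 4 - x ^ 2) (-(2 * x)) x := by
    simpa using (hasDerivAt_pow 2 x).const_sub 4
  refine (hd.mul (hd.sqrt h4.ne')).congr_deriv ?_
  have hs := Real.mul_self_sqrt h4.le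
  have hs0 : √(4 - x ^ 2) ≠ 0 := (Real.sqrt_pos.2 h4).ne'
  field_simp
  linear_combination x * hs

lemma semiInt_pow_add_two (k : ℕ) :
    (k + 4) * semiInt (fun x => x ^ (k + 2)) = 4 * (k + 1) * semiInt fun x => x ^ k := by
  have h := intervalIntegral.integral_eq_sub_of_hasDerivAt_of_le (a := -2) (b := 2)
    (f := fun x : ℝ => x ^ (k + 1) * ((4 - x ^ 2) * √(4 - x ^ 2)))
    (f' := fun x => (2 * Real.pi) * ((4 * (k + 1) * x ^ k - (k + 4) * x ^ (k + 2)) * semiDensity x))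
    (by norm_num) (by fun_prop) (fun x hx => by
      refine ((hasDerivAt_pow (k + 1) x).mul (hasDerivAt_cube_sqrt hx)).congr_deriv ?_
      rw [semiDensity]
      field_simp
      push_cast
      ring)
    (((by fun_prop : Continuous fun x : ℝ => 4 * (k + 1) * x ^ k - (k + 4) * x ^ (k + 2)).mul
      continuous_semiDensity).const_mul _ |>.intervalIntegrable _ _)
  rw [intervalIntegral.integral_const_mul] at h
  have h' : semiInt (fun x => 4 * (k + 1) * x ^ k - (k + 4) * x ^ (k + 2)) = 0 := by
    have hp : 2 * Real.pi ≠ 0 := by positivity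
    refine (mul_eq_zero.1 (h.trans ?_)).resolve_left hp
    norm_num
  rw [semiInt_sub (by fun_prop) (by fun_prop), semiInt_const_mul, semiInt_const_mul] at h'
  linarith

lemma semiInt_one : semiInt (fun x => x ^ 0) = 1 := by
  have h := intervalIntegral.integral_comp_mul_left (a := -1) (b := 1)
    (fun x : ℝ => √(4 - x ^ 2)) (two_ne_zero' ℝ)
  have e : ∀ x : ℝ, √(4 - (2 * x) ^ 2) = 2 * √(1 - x ^ 2) := by
    intro x
    rw [show 4 - (2 * x) ^ 2 = 2 ^ 2 * (1 - x ^ 2) by ring, Real.sqrt_mul (by positivity),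
      Real.sqrt_sq (by norm_num)]
  simp only [e, intervalIntegral.integral_const_mul, integral_sqrt_one_sub_sq] at h
  norm_num at h
  simp only [semiInt, semiDensity, pow_zero, one_mul, intervalIntegral.integral_div]
  rw [div_eq_one_iff_eq (by positivity)]
  linarith

lemma semiInt_id : semiInt (fun x => x ^ 1) = 0 := by
  have h := intervalIntegral.integral_eq_sub_of_hasDerivAt_of_le (a := -2) (b := 2)
    (f := fun x : ℝ => (4 - x ^ 2) * √(4 - x ^ 2))
    (f' := fun x => (-(6 * Real.pi)) * (x ^ 1 * semiDensity x))
    (by norm_num) (by fun_prop) (fun x hx => by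
      refine (hasDerivAt_cube_sqrt hx).congr_deriv ?_
      rw [semiDensity]
      field_simp
      ring)
    (((by fun_prop : Continuous fun x : ℝ => x ^ 1).mul
      continuous_semiDensity).const_mul _ |>.intervalIntegrable _ _)
  rw [intervalIntegral.integral_const_mul] at h
  have hp : -(6 * Real.pi) ≠ 0 := by simp [Real.pi_ne_zero]
  refine (mul_eq_zero.1 (h.trans ?_)).resolve_left hp
  norm_num

lemma sum_range_two_mul_add_one (f : ℕ → ℝ) (n : ℕ) : ∑ j ∈ Finset.range (2 * n + 1), f j =
    ∑ i ∈ Finset.range (n + 1), f (2 * i) + ∑ i ∈ Finset.range n, f (2 * i + 1) := by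
  induction n with
  | zero => simp
  | succ n ih =>
    rw [show 2 * (n + 1) + 1 = 2 * n + 1 + 1 + 1 by ring, Finset.sum_range_succ,
      Finset.sum_range_succ, ih, Finset.sum_range_succ _ (n + 1),
      Finset.sum_range_succ (fun i => f (2 * i + 1)) n, mul_add 2 n 1]
    ring_nf

lemma semicircleMoment_eq (k : ℕ) :
    semicircleMoment (2 * k) = catalan k ∧ semicircleMoment (2 * k + 1) = 0 := by
  induction k using Nat.strong_induction_on with
  | _ k ih =>
    constructor
    · rcases k with _ | k
      · simp [semicircleMoment_zero]
      rw [show 2 * (k + 1) = 2 * k + 1 + 1 by ring, semicircleMoment_succ,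
        sum_range_two_mul_add_one, Finset.sum_eq_zero (s := Finset.range k), add_zero, catalan_succ,
        Nat.cast_sum, ← Fin.sum_univ_eq_sum_range
          (fun i => semicircleMoment (2 * i) * semicircleMoment (2 * k + 1 - 1 - 2 * i))]
      · refine Finset.sum_congr rfl fun i _ => ?_
        rw [show 2 * k + 1 - 1 - 2 * (i : ℕ) = 2 * (k - i) by omega, (ih _ i.2).1,
          (ih _ (by omega)).1, Nat.cast_mul]
      · intro i hi
        rw [(ih i (by have := Finset.mem_range.1 hi; omega)).2, zero_mul]
    · rw [semicircleMoment_succ]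
      refine Finset.sum_eq_zero fun j hj => ?_
      have hj := Finset.mem_range.1 hj
      rcases Nat.even_or_odd' j with ⟨i, rfl | rfl⟩
      · rw [show 2 * k - 1 - 2 * i = 2 * (k - 1 - i) + 1 by omega, (ih _ (by omega)).2, mul_zero]
      · rw [(ih i (by omega)).2, zero_mul]

lemma semiInt_pow (k : ℕ) : semiInt (fun x => x ^ k) = semicircleMoment k := by
  have key : ∀ k : ℕ, semiInt (fun x => x ^ (2 * k)) = catalan k ∧
      semiInt (fun x => x ^ (2 * k + 1)) = 0 := by
    intro k
    induction k with
    | zero => exact ⟨by simpa using semiInt_one, semiInt_id⟩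
    | succ k ih =>
      constructor
      · have h := semiInt_pow_add_two (2 * k)
        have h1 : ((k : ℝ) + 1) * catalan k = k.centralBinom := by
          exact_mod_cast succ_mul_catalan_eq_centralBinom k
        have h2 : ((k : ℝ) + 2) * catalan (k + 1) = (k + 1).centralBinom := by
          exact_mod_cast succ_mul_catalan_eq_centralBinom (k + 1)
        have h3 : ((k : ℝ) + 1) * (k + 1).centralBinom = 2 * (2 * k + 1) * k.centralBinom := by
          exact_mod_cast Nat.succ_mul_centralBinom_succ k
        rw [ih.1] at h
        push_cast at h
        have hk1 : ((k : ℝ) + 1) ≠ 0 := by positivity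
        have hk2 : ((k : ℝ) + 2) ≠ 0 := by positivity
        rw [mul_add 2 k 1, mul_one]
        apply mul_left_cancel₀ (mul_ne_zero hk1 hk2)
        rw [← h1, ← h2] at h3
        linear_combination (k + 1 : ℝ) / 2 * h - h3
      · have h := semiInt_pow_add_two (2 * k + 1)
        rw [ih.2, mul_zero] at h
        exact (mul_eq_zero.1 h).resolve_left (by positivity)
  rcases Nat.even_or_odd' k with ⟨i, rfl | rfl⟩
  · rw [(key i).1, (semicircleMoment_eq i).1]
  · rw [(key i).2, (semicircleMoment_eq i).2]

lemma semiInt_eval (p : ℝ[X]) :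
    semiInt (fun x => p.eval x) = ∑ k ∈ p.support, p.coeff k * semicircleMoment k := by
  have h : ∀ s : Finset ℕ, semiInt (fun x => ∑ k ∈ s, p.coeff k * x ^ k) =
      ∑ k ∈ s, p.coeff k * semicircleMoment k := by
    intro s
    induction s using Finset.induction_on with
    | empty => simp [semiInt]
    | insert a s ha ih =>
      simp only [Finset.sum_insert ha]
      rw [semiInt_add (by fun_prop) (by fun_prop), ih, semiInt_const_mul, semiInt_pow]
  simpa only [Polynomial.eval_eq_sum, Polynomial.sum_def] using h p.support

lemma abs_semiInt_sub_le {f g : ℝ → ℝ} (hf : Continuous f) (hg : Continuous g) {c : ℝ}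
    (h : ∀ x ∈ Set.Icc (-2 : ℝ) 2, |f x - g x| ≤ c) : |semiInt f - semiInt g| ≤ c := by
  rw [← semiInt_sub hf hg]
  have h1 : semiInt (fun _ => c) = c := by
    have := semiInt_const_mul c fun x => x ^ 0
    rw [semiInt_one] at this
    simpa using this
  conv_rhs => rw [← h1]
  refine (intervalIntegral.abs_integral_le_integral_abs (by norm_num)).trans ?_
  refine intervalIntegral.integral_mono_on (by norm_num)
    (((hf.sub hg).mul continuous_semiDensity).abs.intervalIntegrable _ _) ?_ fun x hx => ?_
  · exact (continuous_const.mul continuous_semiDensity).intervalIntegrable _ _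
  · rw [abs_mul, abs_of_nonneg (semiDensity_nonneg x)]
    exact mul_le_mul_of_nonneg_right (h x hx) (semiDensity_nonneg x)

lemma msupport_SC_subset (m σ : ℝ) : msupport (SC m σ) ⊆ Set.Icc (m - 2 * σ) (m + 2 * σ) := by
  intro x hx
  by_contra hn
  refine (hx _ isClosed_Icc.isOpen_compl hn).ne' ?_
  rw [SC, withDensity_apply _ measurableSet_Icc.compl]
  rw [setLIntegral_congr_fun (g := fun _ => 0) measurableSet_Icc.compl, lintegral_zero]
  intro y hy
  simp [Set.indicator_of_notMem hy]

end Semicircle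

section SpectralMatching

open scoped Matrix.Norms.L2Operator

/-- The first moments and the norm of `y` are close to those of the standard semicircular
distribution, with precision `1 / (K + 1)`. -/
def SemiGood {N : Type*} [Fintype N] [DecidableEq N] (K : ℕ) (y : Matrix N N ℂ) : Prop :=
  (∀ k ≤ K, |ntr (y ^ k) - semicircleMoment k| < 1 / (K + 1 : ℝ)) ∧ ‖y‖ < 2 + 1 / (K + 1 : ℝ)

lemma Matrix.IsHermitian.abs_eigenvalues_le {N : Type*} [Fintype N] [DecidableEq N]
    {y : Matrix N N ℂ} (hy : y.IsHermitian) (i : N) : |hy.eigenvalues i| ≤ ‖y‖ := by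
  rw [hy.norm_eq]
  exact norm_le_pi_norm hy.eigenvalues i

lemma eventually_semiGood_mean {f : ℝ → ℝ} (hf : Continuous f) {δ : ℝ} (hδ : 0 < δ) :
    ∀ᶠ K : ℕ in atTop, ∀ (N : Type) [Fintype N] [DecidableEq N] [Nonempty N] (y : Matrix N N ℂ)
      (hy : y.IsHermitian), SemiGood K y →
      |(∑ i, f (hy.eigenvalues i)) / Fintype.card N - semiInt f| ≤ δ := by
  obtain ⟨p, hp⟩ := exists_polynomial_near_of_continuousOn (-3) 3 f hf.continuousOn (δ / 3)
    (by positivity)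
  set c := ∑ k ∈ p.support, |p.coeff k| with hc
  have hlim : Tendsto (fun K : ℕ => c * (1 / (K + 1 : ℝ))) atTop (𝓝 (c * 0)) :=
    tendsto_one_div_add_atTop_nhds_zero_nat.const_mul c
  rw [mul_zero] at hlim
  filter_upwards [hlim.eventually_lt_const (by positivity : 0 < δ / 3),
    eventually_ge_atTop p.natDegree] with K hK hdeg N _ _ _ y hy hgood
  have hN : (0 : ℝ) < Fintype.card N := by simp [Fintype.card_pos]
  have hK1 : 1 / (K + 1 : ℝ) ≤ 1 := by
    rw [div_le_one (by positivity)]; linarith [(Nat.cast_nonneg K : (0 : ℝ) ≤ K)]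
  have hmem : ∀ i, hy.eigenvalues i ∈ Set.Icc (-3 : ℝ) 3 := fun i => by
    have := (hy.abs_eigenvalues_le i).trans (hgood.2.le.trans (add_le_add_right hK1 2))
    exact abs_le.1 (by linarith)
  have h1 : |(∑ i, f (hy.eigenvalues i)) / Fintype.card N -
      (∑ i, p.eval (hy.eigenvalues i)) / Fintype.card N| ≤ δ / 3 := by
    rw [← sub_div, ← Finset.sum_sub_distrib, abs_div, abs_of_pos hN, div_le_iff₀ hN]
    calc _ ≤ ∑ i, |f (hy.eigenvalues i) - p.eval (hy.eigenvalues i)| :=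
          Finset.abs_sum_le_sum_abs _ _
      _ ≤ ∑ _i : N, δ / 3 := Finset.sum_le_sum fun i _ => by
          rw [abs_sub_comm]; exact (hp _ (hmem i)).le
      _ = _ := by simp [mul_comm]
  have h2 : |(∑ i, p.eval (hy.eigenvalues i)) / Fintype.card N - semiInt fun x => p.eval x|
      ≤ δ / 3 := by
    have e : (∑ i, p.eval (hy.eigenvalues i)) / Fintype.card N =
        ∑ k ∈ p.support, p.coeff k * ntr (y ^ k) := by
      simp only [hy.ntr_pow, Polynomial.eval_eq_sum, Polynomial.sum_def]
      rw [Finset.sum_comm, Finset.sum_div]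
      simp only [Finset.sum_div, Finset.mul_sum, mul_div_assoc]
    rw [e, semiInt_eval, ← Finset.sum_sub_distrib]
    calc _ ≤ ∑ k ∈ p.support, |p.coeff k * ntr (y ^ k) - p.coeff k * semicircleMoment k| :=
          Finset.abs_sum_le_sum_abs _ _
      _ ≤ ∑ k ∈ p.support, |p.coeff k| * (1 / (K + 1 : ℝ)) := Finset.sum_le_sum fun k hk => by
          rw [← mul_sub, abs_mul]
          exact mul_le_mul_of_nonneg_left
            (hgood.1 k ((le_natDegree_of_mem_supp k hk).trans hdeg)).le (abs_nonneg _)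
      _ = c * (1 / (K + 1 : ℝ)) := by rw [hc, Finset.sum_mul]
      _ ≤ δ / 3 := hK.le
  have h3 : |(semiInt fun x => p.eval x) - semiInt f| ≤ δ / 3 :=
    abs_semiInt_sub_le p.continuous hf fun x hx =>
      (hp x ⟨by linarith [hx.1], by linarith [hx.2]⟩).le
  rw [abs_le] at *
  constructor <;> linarith [h1.1, h1.2, h2.1, h2.2, h3.1, h3.2]

/-- The continuous function equal to `0` below `t`, to `1` above `t + h`, and affine between. -/
def ramp (h t x : ℝ) : ℝ := max 0 (min 1 ((x - t) / h))

lemma continuous_ramp (h t : ℝ) : Continuous (ramp h t) := by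
  unfold ramp; fun_prop

lemma ramp_nonneg (h t x : ℝ) : 0 ≤ ramp h t x := le_max_left _ _

lemma ramp_le_one (h t x : ℝ) : ramp h t x ≤ 1 := max_le zero_le_one (min_le_left _ _)

lemma ramp_eq_zero {h t x : ℝ} (hh : 0 < h) (hx : x ≤ t) : ramp h t x = 0 :=
  max_eq_left ((min_le_right _ _).trans (div_nonpos_of_nonpos_of_nonneg (by linarith) hh.le))

lemma ramp_eq_one {h t x : ℝ} (hh : 0 < h) (hx : t + h ≤ x) : ramp h t x = 1 := by
  have : 1 ≤ (x - t) / h := by rw [le_div_iff₀ hh]; linarith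
  rw [ramp, min_eq_left this, max_eq_right zero_le_one]

lemma ramp_pos {h t x : ℝ} (hh : 0 < h) (hx : t < x) : 0 < ramp h t x :=
  lt_max_of_lt_right (lt_min one_pos (div_pos (by linarith) hh))

lemma semiInt_ramp_lt {h t : ℝ} (hh : 0 < h) (h1 : -2 ≤ t) (h2 : t < 2) :
    semiInt (ramp h (t + h)) < semiInt (ramp h t) := by
  rw [← sub_pos, ← semiInt_sub (continuous_ramp _ _) (continuous_ramp _ _)]
  have hmin : t < min (t + h) 2 := lt_min (by linarith) h2
  refine semiInt_pos ((continuous_ramp _ _).sub (continuous_ramp _ _)) (fun x => ?_)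
    ⟨(t + min (t + h) 2) / 2, ⟨by linarith, by linarith [min_le_right (t + h) 2]⟩, ?_⟩
  · rw [sub_nonneg]
    exact max_le_max le_rfl (min_le_min le_rfl (by gcongr; linarith))
  · rw [ramp_eq_zero hh (x := (t + min (t + h) 2) / 2) (t := t + h)
      (by linarith [min_le_left (t + h) 2]), sub_zero]
    exact ramp_pos hh (by linarith)

lemma Matrix.IsHermitian.sum_eigenvalues_eq {N : Type*} [Fintype N] [DecidableEq N]
    {y : Matrix N N ℂ} (hy : y.IsHermitian) (f : ℝ → ℝ) :
    ∑ i, f (hy.eigenvalues i) = ∑ i, f (hy.eigenvalues₀ i) :=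
  Equiv.sum_comp (Fintype.equivOfCardEq (Fintype.card_fin _)).symm
    fun i => f (hy.eigenvalues₀ i)

lemma Matrix.IsHermitian.abs_eigenvalues₀_le {N : Type*} [Fintype N] [DecidableEq N]
    {y : Matrix N N ℂ} (hy : y.IsHermitian) (i : Fin (Fintype.card N)) :
    |hy.eigenvalues₀ i| ≤ ‖y‖ := by
  have h := hy.abs_eigenvalues_le (Fintype.equivOfCardEq (Fintype.card_fin _) i)
  simpa [Matrix.IsHermitian.eigenvalues] using h

/-- Sorted eigenvalues of two matrices with almost semicircular moments are close. -/
lemma eventually_eigenvalues₀_le {ε : ℝ} (hε : 0 < ε) :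
    ∀ᶠ K : ℕ in atTop, ∀ (N : Type) [Fintype N] [DecidableEq N] [Nonempty N] (y g : Matrix N N ℂ)
      (hy : y.IsHermitian) (hg : g.IsHermitian), SemiGood K y → SemiGood K g →
      ∀ i, hy.eigenvalues₀ i ≤ hg.eigenvalues₀ i + ε := by
  set h := ε / 4 with hh
  have hpos : 0 < h := by positivity
  set J := ⌈4 / h⌉₊ + 1 with hJ
  set t : ℕ → ℝ := fun j => -2 + j * h with ht
  have htsucc : ∀ j, t (j + 1) = t j + h := fun j => by simp only [ht]; push_cast; ring
  have ev : ∀ᶠ K : ℕ in atTop, ∀ j ∈ Finset.range J, t j < 2 →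
      ∀ (N : Type) [Fintype N] [DecidableEq N] [Nonempty N] (y g : Matrix N N ℂ)
      (hy : y.IsHermitian) (hg : g.IsHermitian), SemiGood K y → SemiGood K g →
      (∑ i, ramp h (t (j + 1)) (hy.eigenvalues i)) / Fintype.card N ≤
        (∑ i, ramp h (t j) (hg.eigenvalues i)) / Fintype.card N := by
    rw [eventually_all_finset]
    intro j _
    by_cases hj : t j < 2
    · have hlt := semiInt_ramp_lt hpos (t := t j)
        (by simp only [ht]; linarith [(by positivity : 0 ≤ (j : ℝ) * h)]) hj
      rw [← htsucc] at hlt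
      set δ := (semiInt (ramp h (t j)) - semiInt (ramp h (t (j + 1)))) / 2 with hδ
      have hδ0 : 0 < δ := by rw [hδ]; linarith
      filter_upwards [eventually_semiGood_mean (continuous_ramp h (t j)) hδ0,
        eventually_semiGood_mean (continuous_ramp h (t (j + 1))) hδ0] with K h1 h2 _ N _ _ _ y g
        hy hg gy gg
      have a := (abs_le.1 (h1 N g hg gg)).1
      have b := (abs_le.1 (h2 N y hy gy)).2
      linarith
    · exact Eventually.of_forall fun K hj' => absurd hj' hj
  have hlim := tendsto_one_div_add_atTop_nhds_zero_nat (𝕜 := ℝ)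
  filter_upwards [ev, hlim.eventually_lt_const hpos] with K hK hKh N _ _ _ y g hy hg gy gg i
  by_contra hcon
  rw [not_le] at hcon
  set s := hg.eigenvalues₀ i with hs
  have hN : (0 : ℝ) < Fintype.card N := by simp [Fintype.card_pos]
  have b1 : -2 - h ≤ s := by
    have := neg_le_of_abs_le (hg.abs_eigenvalues₀_le i)
    linarith [gg.2]
  have b2 : s + ε < 2 + h := by
    have := (le_abs_self _).trans (hy.abs_eigenvalues₀_le i)
    linarith [gy.2]
  set j := ⌈(s + 2) / h⌉₊ with hj
  have c1 : s ≤ t j := by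
    have := Nat.le_ceil ((s + 2) / h)
    rw [← hj, div_le_iff₀ hpos] at this
    simp only [ht]; linarith
  have c2 : t j ≤ s + 2 * h := by
    rcases le_or_gt 0 ((s + 2) / h) with h0 | h0
    · have := Nat.ceil_lt_add_one h0
      rw [← hj, ← sub_lt_iff_lt_add, lt_div_iff₀ hpos] at this
      simp only [ht]; linarith
    · rw [hj, Nat.ceil_eq_zero.2 h0.le] at *
      simp only [ht]; push_cast; linarith
  have c3 : t j < 2 := by linarith
  have hjJ : j < J := by
    have : (s + 2) / h ≤ 4 / h := by gcongr; linarith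
    exact Nat.lt_succ_of_le (Nat.ceil_le_ceil this)
  have key := hK j (Finset.mem_range.2 hjJ) c3 N y g hy hg gy gg
  rw [div_le_div_iff_of_pos_right hN, hy.sum_eigenvalues_eq, hg.sum_eigenvalues_eq] at key
  have l1 : ((i : ℕ) : ℝ) + 1 ≤ ∑ l, ramp h (t (j + 1)) (hy.eigenvalues₀ l) := by
    calc ((i : ℕ) : ℝ) + 1 = ∑ l ∈ Finset.Iic i, (1 : ℝ) := by simp
      _ ≤ ∑ l ∈ Finset.Iic i, ramp h (t (j + 1)) (hy.eigenvalues₀ l) :=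
        Finset.sum_le_sum fun l hl => by
          have := hy.eigenvalues₀_antitone (Finset.mem_Iic.1 hl)
          rw [ramp_eq_one hpos]
          rw [htsucc]; linarith
      _ ≤ _ := Finset.sum_le_sum_of_subset_of_nonneg (Finset.subset_univ _)
        fun _ _ _ => ramp_nonneg _ _ _
  have l2 : ∑ l, ramp h (t j) (hg.eigenvalues₀ l) ≤ (i : ℕ) := by
    calc _ = ∑ l ∈ Finset.Iio i, ramp h (t j) (hg.eigenvalues₀ l) := by
          refine (Finset.sum_subset (Finset.subset_univ _) fun l _ hl => ?_).symm
          have := hg.eigenvalues₀_antitone (not_lt.1 fun h => hl (Finset.mem_Iio.2 h))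
          exact ramp_eq_zero hpos (by linarith)
      _ ≤ ∑ l ∈ Finset.Iio i, (1 : ℝ) := Finset.sum_le_sum fun _ _ => ramp_le_one _ _ _
      _ = _ := by simp
  linarith

/-- Matrices with almost semicircular moments are almost unitarily equivalent. -/
lemma eventually_exists_unitary_near {ε : ℝ} (hε : 0 < ε) :
    ∀ᶠ K : ℕ in atTop, ∀ (N : Type) [Fintype N] [DecidableEq N] [Nonempty N] (y g : Matrix N N ℂ),
      y.IsHermitian → g.IsHermitian → SemiGood K y → SemiGood K g →
      ∃ W ∈ unitary (Matrix N N ℂ), ‖star W * y * W - g‖ ≤ ε := by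
  filter_upwards [eventually_eigenvalues₀_le hε] with K hK N _ _ _ y g hy hg gy gg
  set U : Matrix N N ℂ := (hy.eigenvectorUnitary : Matrix N N ℂ) with hU
  set V : Matrix N N ℂ := (hg.eigenvectorUnitary : Matrix N N ℂ) with hV
  have hUm : U ∈ unitary (Matrix N N ℂ) := hy.eigenvectorUnitary.2
  have hVm : V ∈ unitary (Matrix N N ℂ) := hg.eigenvectorUnitary.2
  refine ⟨U * star V, mul_mem hUm (Unitary.star_mem hVm), ?_⟩
  have e : star (U * star V) * y * (U * star V) - g =
      V * (diagonal fun i => ((hy.eigenvalues i - hg.eigenvalues i : ℝ) : ℂ)) * star V := by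
    have ey := hy.eq_conj_diagonal
    have eg := hg.eq_conj_diagonal
    rw [← hU] at ey
    rw [← hV] at eg
    set D := diagonal fun i => (hy.eigenvalues i : ℂ)
    set D' := diagonal fun i => (hg.eigenvalues i : ℂ)
    have hD : (diagonal fun i => ((hy.eigenvalues i - hg.eigenvalues i : ℝ) : ℂ)) = D - D' := by
      simp [D, D']
    rw [hD]
    conv_lhs => rw [ey, eg]
    rw [star_mul, star_star]
    have : V * star U * (U * D * star U) * (U * star V) =
        V * (star U * U) * D * (star U * U) * star V := by noncomm_ring
    rw [this, (Unitary.mem_iff.1 hUm).1]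
    noncomm_ring
  rw [e, norm_conj hVm, l2_opNorm_diagonal, pi_norm_le_iff_of_nonneg hε.le]
  intro i
  rw [Complex.norm_real, Real.norm_eq_abs, abs_le]
  have h1 := hK N y g hy hg gy gg ((Fintype.equivOfCardEq (Fintype.card_fin _)).symm i)
  have h2 := hK N g y hg hy gg gy ((Fintype.equivOfCardEq (Fintype.card_fin _)).symm i)
  constructor <;> simp only [Matrix.IsHermitian.eigenvalues] <;> linarith

end SpectralMatching

section UnitaryHaar

open scoped Matrix.Norms.L2Operator ENNReal

set_option linter.unusedSectionVars false

instance borelSpace_matrix (m n : Type*) [Countable m] [Countable n] :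
    BorelSpace (Matrix m n ℂ) :=
  inferInstanceAs (BorelSpace (m → n → ℂ))

variable {N : Type*} [Fintype N] [DecidableEq N]

instance secondCountable_matrix : SecondCountableTopology (Matrix N N ℂ) :=
  inferInstanceAs (SecondCountableTopology (N → N → ℂ))

instance compactSpace_unitary : CompactSpace (unitary (Matrix N N ℂ)) := by
  have : ProperSpace (Matrix N N ℂ) := FiniteDimensional.proper ℂ _
  refine (isCompact_iff_compactSpace (s := (unitary (Matrix N N ℂ) : Set (Matrix N N ℂ)))).1
    (Metric.isCompact_of_isClosed_isBounded ?_ ?_)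
  · exact isClosed_unitary
  · refine (Metric.isBounded_closedBall (x := (0 : Matrix N N ℂ)) (r := 1)).subset fun U hU => ?_
    rw [mem_closedBall_zero_iff]
    exact norm_le_one_of_isometry U (Unitary.mem_iff.1 hU).1

instance borelSpace_unitary : BorelSpace (unitary (Matrix N N ℂ)) :=
  Subtype.borelSpace _

/-- The normalized Haar measure on the unitary group. -/
def unitaryHaar (N : Type*) [Fintype N] [DecidableEq N] : Measure (unitary (Matrix N N ℂ)) :=
  Measure.haarMeasure ⊤

instance : IsProbabilityMeasure (unitaryHaar N) :=
  ⟨Measure.haarMeasure_self⟩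

instance : (unitaryHaar N).IsMulLeftInvariant := by
  unfold unitaryHaar; infer_instance

variable {N' : Type*} [Fintype N'] [DecidableEq N'] {ι : Type*} [Fintype ι]

/-- Matrices with almost semicircular moments whose image under `L` has large norm. -/
def badSet (L : Matrix N N ℂ →ₗ[ℂ] Matrix N' N' ℂ) (K : ℕ) (r : ℝ) : Set (Matrix N N ℂ) :=
  {X | SemiGood K X ∧ r ≤ ‖L X‖}

lemma continuous_linearMap_matrix (L : Matrix N N ℂ →ₗ[ℂ] Matrix N' N' ℂ) : Continuous L :=
  L.continuous_of_finiteDimensional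

lemma continuous_ntr_pow (k : ℕ) : Continuous fun X : Matrix N N ℂ => ntr (X ^ k) := by
  unfold ntr
  fun_prop

lemma measurableSet_badSet (L : Matrix N N ℂ →ₗ[ℂ] Matrix N' N' ℂ) (K : ℕ) (r : ℝ) :
    MeasurableSet (badSet L K r) := by
  have h1 : MeasurableSet {X : Matrix N N ℂ | SemiGood K X} := by
    simp only [SemiGood, Set.ofPred_and, Set.ofPred_forall]
    refine MeasurableSet.inter (MeasurableSet.iInter fun k => MeasurableSet.iInter fun _ =>
      (isOpen_lt ?_ continuous_const).measurableSet)
      (isOpen_lt continuous_norm continuous_const).measurableSet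
    exact ((continuous_ntr_pow k).sub continuous_const).abs
  exact h1.inter (isClosed_le continuous_const
    (continuous_linearMap_matrix L).norm).measurableSet

lemma map_gueMat (L : Matrix N N ℂ →ₗ[ℂ] Matrix N' N' ℂ) (E : ι → Matrix N N ℂ) (g : ι → ℝ) :
    L (gueMat E g) = gueMat (fun α => L (E α)) g := by
  simp [gueMat]

lemma conj_gueMat (V : Matrix N N ℂ) (E : ι → Matrix N N ℂ) (g : ι → ℝ) :
    star V * gueMat E g * V = gueMat (fun α => star V * E α * V) g := by
  simp [gueMat, Finset.mul_sum, Finset.sum_mul]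

lemma IsGUEFamily.conj {E : ι → Matrix N N ℂ} (hE : IsGUEFamily E) {V : Matrix N N ℂ}
    (hV : V ∈ unitary (Matrix N N ℂ)) : IsGUEFamily fun α => star V * E α * V := by
  simpa [star_eq_conjTranspose] using hE.compression V (Unitary.mem_iff.1 hV).1 1 (by simp)

lemma SemiGood.of_conj {K : ℕ} {y V : Matrix N N ℂ} (hV : V ∈ unitary (Matrix N N ℂ))
    (h : SemiGood K (star V * y * V)) : SemiGood K y := by
  have hV' := Unitary.star_mem hV
  have h1 := fun k => trace_unitary_conj_pow hV' y k
  have h2 := norm_conj hV' y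
  rw [star_star] at h2
  simp only [star_star] at h1
  simpa only [SemiGood, ntr, h1, h2] using h

/-- A comparison between the Haar-random conjugates of a fixed matrix and a GUE matrix. -/
lemma unitaryHaar_mul_gaussPi_le {E : ι → Matrix N N ℂ} {L : Matrix N N ℂ →ₗ[ℂ] Matrix N' N' ℂ}
    {C ε r : ℝ} (hLC : ∀ X, ‖L X‖ ≤ C * ‖X‖) (hC : 0 ≤ C) {K : ℕ}
    (hE : IsGUEFamily E)
    (hK : ∀ y g : Matrix N N ℂ, y.IsHermitian → g.IsHermitian → SemiGood K y → SemiGood K g →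
      ∃ W ∈ unitary (Matrix N N ℂ), ‖star W * y * W - g‖ ≤ ε) {T : ℝ≥0∞}
    (hT : ∀ V ∈ unitary (Matrix N N ℂ),
      gaussPi ι {g | r ≤ ‖L (star V * gueMat E g * V)‖} ≤ T)
    (y : Matrix N N ℂ) (hy : y.IsHermitian) :
    unitaryHaar N {V | star (V : Matrix N N ℂ) * y * V ∈ badSet L K (r + C * ε)} *
      gaussPi ι {g | SemiGood K (gueMat E g)} ≤ T := by
  set c := unitaryHaar N {V | star (V : Matrix N N ℂ) * y * V ∈ badSet L K (r + C * ε)} with hc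
  set S : Set (unitary (Matrix N N ℂ) × (ι → ℝ)) :=
    {q | r ≤ ‖L (star (q.1 : Matrix N N ℂ) * gueMat E q.2 * q.1)‖} with hS
  have hSm : MeasurableSet S := by
    refine (isClosed_le continuous_const ((continuous_linearMap_matrix L).comp ?_).norm).measurableSet
    have h1 : Continuous fun q : unitary (Matrix N N ℂ) × (ι → ℝ) => (q.1 : Matrix N N ℂ) :=
      continuous_subtype_val.comp continuous_fst
    exact ((h1.star).mul ((continuous_gueMat E).comp continuous_snd)).mul h1
  set φ : (ι → ℝ) → ℝ≥0∞ := fun g => unitaryHaar N ((fun V => (V, g)) ⁻¹' S) with hφ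
  have hφm : Measurable φ := measurable_measure_prodMk_right hSm
  have htot : ∫⁻ g, φ g ∂(gaussPi ι) ≤ T := by
    rw [hφ, ← Measure.prod_apply_symm hSm, Measure.prod_apply hSm]
    calc _ ≤ ∫⁻ _, T ∂(unitaryHaar N) := lintegral_mono fun V => hT V V.2
      _ = T := by simp
  rcases eq_or_ne c 0 with h0 | h0
  · rw [h0, zero_mul]; exact zero_le
  obtain ⟨V₀, hV₀⟩ := nonempty_of_measure_ne_zero h0
  have gy : SemiGood K y := SemiGood.of_conj V₀.2 hV₀.1
  refine le_trans (mul_le_mul_right (measure_mono fun g hg => ?_) c)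
    ((mul_meas_ge_le_lintegral hφm c).trans htot)
  obtain ⟨W, hW, hWn⟩ := hK y _ hy (hE.isHermitian_gueMat g) gy hg
  have hinv : c = unitaryHaar N ((fun V => (⟨W, hW⟩ : unitary (Matrix N N ℂ)) * V) ⁻¹'
      {V | star (V : Matrix N N ℂ) * y * V ∈ badSet L K (r + C * ε)}) :=
    (measure_preimage_mul _ _ _).symm
  change c ≤ φ g
  rw [hinv]
  refine measure_mono fun V hV => ?_
  have hV2 : r + C * ε ≤ ‖L (star (W * V : Matrix N N ℂ) * y * (W * V))‖ := hV.2
  change r ≤ ‖L (star (V : Matrix N N ℂ) * gueMat E g * V)‖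
  have hVs := norm_conj (Unitary.star_mem V.2) (star W * y * W - gueMat E g)
  rw [star_star] at hVs
  have hdiff : ‖L (star (W * V : Matrix N N ℂ) * y * (W * V)) -
      L (star (V : Matrix N N ℂ) * gueMat E g * V)‖ ≤ C * ε := by
    rw [← map_sub]
    refine (hLC _).trans (mul_le_mul_of_nonneg_left ?_ hC)
    have e : star (W * V : Matrix N N ℂ) * y * (W * V) - star (V : Matrix N N ℂ) * gueMat E g * V =
        star (V : Matrix N N ℂ) * (star W * y * W - gueMat E g) * V := by
      rw [star_mul]; noncomm_ring
    rw [e, hVs]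
    exact hWn
  linarith [norm_sub_norm_le (L (star (W * V : Matrix N N ℂ) * y * (W * V)))
    (L (star (V : Matrix N N ℂ) * gueMat E g * V))]

lemma measure_badSet_mul_gaussPi_le {E : ι → Matrix N N ℂ}
    {L : Matrix N N ℂ →ₗ[ℂ] Matrix N' N' ℂ} {C ε r : ℝ} (hLC : ∀ X, ‖L X‖ ≤ C * ‖X‖) (hC : 0 ≤ C)
    {K : ℕ} (hE : IsGUEFamily E)
    (hK : ∀ y g : Matrix N N ℂ, y.IsHermitian → g.IsHermitian → SemiGood K y → SemiGood K g →
      ∃ W ∈ unitary (Matrix N N ℂ), ‖star W * y * W - g‖ ≤ ε) {T : ℝ≥0∞}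
    (hT : ∀ V ∈ unitary (Matrix N N ℂ),
      gaussPi ι {g | r ≤ ‖L (star V * gueMat E g * V)‖} ≤ T)
    {Ω : Type*} [MeasurableSpace Ω] (ℙ : Measure Ω) [IsProbabilityMeasure ℙ]
    (Z : Ω → Matrix N N ℂ) (hZ : Measurable Z) (hherm : ∀ ω, (Z ω).IsHermitian)
    (hinv : ∀ U ∈ unitary (Matrix N N ℂ),
      Measure.map (fun ω => U * Z ω * star U) ℙ = Measure.map Z ℙ) :
    ℙ {ω | Z ω ∈ badSet L K (r + C * ε)} * gaussPi ι {g | SemiGood K (gueMat E g)} ≤ T := by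
  set B := badSet L K (r + C * ε) with hB
  have hBm : MeasurableSet B := measurableSet_badSet _ _ _
  set S : Set (unitary (Matrix N N ℂ) × Ω) := {q | star (q.1 : Matrix N N ℂ) * Z q.2 * q.1 ∈ B}
    with hS
  have hSm : MeasurableSet S := by
    have hcont : Continuous fun q : unitary (Matrix N N ℂ) × Matrix N N ℂ =>
        star (q.1 : Matrix N N ℂ) * q.2 * q.1 := by
      have h1 : Continuous fun q : unitary (Matrix N N ℂ) × Matrix N N ℂ => (q.1 : Matrix N N ℂ) :=
        continuous_subtype_val.comp continuous_fst
      exact ((h1.star).mul continuous_snd).mul h1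
    exact (hcont.measurable.comp (measurable_fst.prodMk (hZ.comp measurable_snd))) hBm
  have hconst : ∀ V : unitary (Matrix N N ℂ), ℙ (Prod.mk V ⁻¹' S) = ℙ {ω | Z ω ∈ B} := by
    intro V
    have h := hinv _ (Unitary.star_mem V.2)
    rw [star_star] at h
    have hm : Measurable fun ω => star (V : Matrix N N ℂ) * Z ω * V := by
      have : Continuous fun X : Matrix N N ℂ => star (V : Matrix N N ℂ) * X * V := by fun_prop
      exact this.measurable.comp hZ
    have h2 : Measure.map (fun ω => star (V : Matrix N N ℂ) * Z ω * V) ℙ B =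
        Measure.map Z ℙ B := by rw [h]
    rw [Measure.map_apply hm hBm, Measure.map_apply hZ hBm] at h2
    exact h2
  have hfubini : ℙ {ω | Z ω ∈ B} = ∫⁻ ω, unitaryHaar N ((fun V => (V, ω)) ⁻¹' S) ∂ℙ := by
    rw [← Measure.prod_apply_symm hSm, Measure.prod_apply hSm]
    simp [hconst]
  rw [hfubini, ← lintegral_mul_const _ (measurable_measure_prodMk_right hSm)]
  calc _ ≤ ∫⁻ _, T ∂ℙ := lintegral_mono fun ω =>
        unitaryHaar_mul_gaussPi_le hLC hC hE hK hT (Z ω) (hherm ω)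
    _ = T := by simp

end UnitaryHaar

section SequenceBound

open scoped Matrix.Norms.L2Operator ENNReal

lemma exists_gue_semiGood_tail (K : ℕ) : ∃ C : ℝ, ∀ (ι N : Type) [Fintype ι] [Fintype N]
    [DecidableEq N] [Nonempty N] (E : ι → Matrix N N ℂ), IsGUEFamily E →
    (gaussPi ι).real {g | ¬ SemiGood K (gueMat E g)} ≤ C / (Fintype.card N : ℝ) ^ 2 := by
  have hη : (0 : ℝ) < 1 / (K + 1 : ℝ) := by positivity
  choose C hC using fun k => exists_gue_moment_tail k hη
  obtain ⟨C', hC'⟩ := exists_gue_norm_tail (half_pos hη)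
  refine ⟨∑ k ∈ Finset.range (K + 1), C k + C', fun ι N _ _ _ _ E hE => ?_⟩
  have hsub : {g | ¬ SemiGood K (gueMat E g)} ⊆
      (⋃ k ∈ Finset.range (K + 1),
        {g | 1 / (K + 1 : ℝ) ≤ |ntr (gueMat E g ^ k) - semicircleMoment k|}) ∪
      {g | 2 * (1 + 1 / (K + 1 : ℝ) / 2) ≤ ‖gueMat E g‖} := by
    intro g hg
    by_contra hcon
    simp only [Set.mem_union, Set.mem_iUnion, Set.mem_ofPred_eq, not_or, not_exists, not_le,
      Finset.mem_range] at hcon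
    refine hg ⟨fun k hk => hcon.1 k (by omega), ?_⟩
    have := hcon.2
    linarith
  calc _ ≤ _ := measureReal_mono hsub
    _ ≤ _ := measureReal_union_le _ _
    _ ≤ ∑ k ∈ Finset.range (K + 1), C k / (Fintype.card N : ℝ) ^ 2 +
          C' / (Fintype.card N : ℝ) ^ 2 :=
        add_le_add ((measureReal_biUnion_finset_le _ _).trans
          (Finset.sum_le_sum fun k _ => hC k ι N E hE)) (hC' ι N E hE)
    _ = _ := by rw [← Finset.sum_div, add_div]

lemma ae_eventually_notMem_of_le {Ω : Type*} [MeasurableSpace Ω] {ℙ : Measure Ω} {s : ℕ → Set Ω}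
    {c : ℝ} (h : ∀ᶠ d : ℕ in atTop, ℙ (s d) ≤ ENNReal.ofReal (c / (d : ℝ) ^ 2)) :
    ∀ᵐ ω ∂ℙ, ∀ᶠ d in atTop, ω ∉ s d := by
  obtain ⟨d₀, hd₀⟩ := eventually_atTop.1 h
  have hs : Summable fun d : ℕ => c / ((d + d₀ : ℕ) : ℝ) ^ 2 := by
    refine (summable_nat_add_iff (f := fun d : ℕ => c / (d : ℝ) ^ 2) d₀).2 ?_
    simpa [div_eq_mul_inv] using (Real.summable_nat_pow_inv.2 one_lt_two).mul_left c
  have hsum : ∑' d, ℙ (s (d + d₀)) ≠ ∞ :=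
    ne_top_of_le_ne_top hs.tsum_ofReal_ne_top
      (ENNReal.tsum_le_tsum fun d => hd₀ (d + d₀) (by omega))
  filter_upwards [ae_eventually_notMem hsum] with ω hω
  obtain ⟨a, ha⟩ := eventually_atTop.1 hω
  filter_upwards [eventually_ge_atTop (a + d₀)] with d hd
  have := ha (d - d₀) (by omega)
  rwa [Nat.sub_add_cancel (by omega)] at this

/-- Linear images of a unitarily invariant, asymptotically semicircular sequence are asymptotically
as small in norm as if the sequence were a GUE. -/
theorem ae_eventually_norm_map_lt {Ω : Type*} [MeasurableSpace Ω] (ℙ : Measure Ω)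
    [IsProbabilityMeasure ℙ] {n : ℕ} (hn : 1 ≤ n)
    (Z : (d : ℕ) → Ω → Matrix (Fin n × Fin d) (Fin n × Fin d) ℂ)
    (hmeas : ∀ d, Measurable (Z d)) (hherm : ∀ d ω, (Z d ω).IsHermitian) (hUI : UnitInv ℙ n Z)
    (hgood : ∀ᵐ ω ∂ℙ, ∀ K, ∀ᶠ d in atTop, SemiGood K (Z d ω))
    (N' : ℕ → Type) [∀ d, Fintype (N' d)] [∀ d, DecidableEq (N' d)]
    (hcard : ∀ d, d ≤ Fintype.card (N' d))
    (L : ∀ d, Matrix (Fin n × Fin d) (Fin n × Fin d) ℂ →ₗ[ℂ] Matrix (N' d) (N' d) ℂ)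
    {C : ℝ} (hC : 0 ≤ C) (hLC : ∀ d X, ‖L d X‖ ≤ C * ‖X‖)
    (hLE : ∀ d, 1 ≤ d → ∀ (ι : Type) [Fintype ι]
      (E : ι → Matrix (Fin n × Fin d) (Fin n × Fin d) ℂ), IsGUEFamily E →
      IsGUEFamily fun α => L d (E α))
    {ε : ℝ} (hε : 0 < ε) :
    ∀ᵐ ω ∂ℙ, ∀ᶠ d in atTop, ‖L d (Z d ω)‖ < 2 + ε := by
  set δ := ε / (2 * (C + 1)) with hδ
  have hδ0 : 0 < δ := by positivity
  obtain ⟨K, hK⟩ := (eventually_exists_unitary_near hδ0).exists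
  obtain ⟨C₁, hC₁⟩ := exists_gue_semiGood_tail K
  obtain ⟨C₂, hC₂⟩ := exists_gue_norm_tail (show 0 < ε / 4 by positivity)
  have hCδ : C * δ ≤ ε / 2 := by
    rw [hδ, mul_div_assoc', div_le_div_iff₀ (by positivity) (by norm_num)]
    nlinarith
  set r := 2 * (1 + ε / 4) with hr
  have hbound : ∀ᶠ d : ℕ in atTop,
      ℙ {ω | Z d ω ∈ badSet (L d) K (r + C * δ)} ≤ ENNReal.ofReal (2 * |C₂| / (d : ℝ) ^ 2) := by
    obtain ⟨d₀, hd₀⟩ := exists_nat_gt (2 * |C₁|)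
    filter_upwards [eventually_ge_atTop (d₀ + 1)] with d hd
    have hd1 : 1 ≤ d := by omega
    have hdR : (1 : ℝ) ≤ d := by exact_mod_cast hd1
    have hdd : (d₀ : ℝ) ≤ d := by exact_mod_cast (by omega : d₀ ≤ d)
    have : Nonempty (Fin n) := ⟨⟨0, hn⟩⟩
    have : Nonempty (Fin d) := ⟨⟨0, hd1⟩⟩
    have : Nonempty (N' d) := Fintype.card_pos_iff.1 (hd1.trans (hcard d))
    obtain ⟨E, hE⟩ := exists_isGUEFamily (Fin n × Fin d)
    have hN : (d : ℝ) ≤ Fintype.card (Fin n × Fin d) := by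
      simp only [Fintype.card_prod, Fintype.card_fin]
      exact_mod_cast Nat.le_mul_of_pos_left d hn
    have hN' : (d : ℝ) ≤ Fintype.card (N' d) := by exact_mod_cast hcard d
    have hT : ∀ V ∈ unitary (Matrix (Fin n × Fin d) (Fin n × Fin d) ℂ),
        gaussPi _ {g | r ≤ ‖L d (star V * gueMat E g * V)‖} ≤
          ENNReal.ofReal (|C₂| / (d : ℝ) ^ 2) := by
      intro V hV
      have h := hC₂ _ _ _ (hLE d hd1 _ _ (hE.conj hV))
      simp only [conj_gueMat, map_gueMat]
      rw [← ofReal_measureReal]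
      refine ENNReal.ofReal_le_ofReal (h.trans ?_)
      calc _ ≤ |C₂| / (Fintype.card (N' d) : ℝ) ^ 2 := by gcongr; exact le_abs_self _
        _ ≤ _ := by gcongr
    have hgoodP : ENNReal.ofReal (1 / 2) ≤ gaussPi _ {g | SemiGood K (gueMat E g)} := by
      have h := hC₁ _ _ E hE
      have h' : (gaussPi _).real {g | ¬ SemiGood K (gueMat E g)} ≤ 1 / 2 := by
        refine h.trans ?_
        rw [div_le_iff₀ (by positivity)]
        nlinarith [le_abs_self C₁]
      rw [← ofReal_measureReal]
      refine ENNReal.ofReal_le_ofReal ?_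
      have hu := measureReal_union_le (μ := gaussPi ((Fin n × Fin d) × (Fin n × Fin d) × Bool))
        {g | SemiGood K (gueMat E g)} {g | ¬ SemiGood K (gueMat E g)}
      have : {g | SemiGood K (gueMat E g)} ∪ {g | ¬ SemiGood K (gueMat E g)} = Set.univ := by
        ext g; simp [em]
      rw [this, probReal_univ] at hu
      linarith
    have hmain := measure_badSet_mul_gaussPi_le (hLC d) hC hE (hK _) hT ℙ (Z d) (hmeas d)
      (hherm d) (hUI d)
    have h3 : ℙ {ω | Z d ω ∈ badSet (L d) K (r + C * δ)} * ENNReal.ofReal (1 / 2) ≤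
        ENNReal.ofReal (|C₂| / (d : ℝ) ^ 2) :=
      (mul_le_mul_right hgoodP _).trans hmain
    calc _ = ℙ {ω | Z d ω ∈ badSet (L d) K (r + C * δ)} * ENNReal.ofReal (1 / 2) *
          ENNReal.ofReal 2 := by
          rw [mul_assoc, ← ENNReal.ofReal_mul (by norm_num)]; norm_num
      _ ≤ ENNReal.ofReal (|C₂| / (d : ℝ) ^ 2) * ENNReal.ofReal 2 := mul_le_mul_left h3 _
      _ = _ := by
          rw [← ENNReal.ofReal_mul (by positivity)]; congr 1; ring
  filter_upwards [hgood, ae_eventually_notMem_of_le hbound] with ω hω hω3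
  filter_upwards [hω K, hω3] with d hd1 hd2
  by_contra hcon
  refine hd2 ⟨hd1, ?_⟩
  rw [not_lt] at hcon
  linarith

end SequenceBound

section Standardization

open scoped Matrix.Norms.L2Operator

set_option linter.unusedSectionVars false

variable {N : Type*} [Fintype N] [DecidableEq N]

/-- The matrix `(Y - m) / σ`. -/
def standardize (m σ : ℝ) (Y : Matrix N N ℂ) : Matrix N N ℂ :=
  ((σ⁻¹ : ℝ) : ℂ) • (Y - (m : ℂ) • 1)

lemma polyApply_standardize_pow (m σ : ℝ) (k : ℕ) (Y : Matrix N N ℂ) :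
    polyApply ((C σ⁻¹ * (X - C m)) ^ k) Y = standardize m σ Y ^ k := by
  have : ((C σ⁻¹ * (X - C m)) ^ k : ℝ[X]).map (algebraMap ℝ ℂ) =
      (C ((σ⁻¹ : ℝ) : ℂ) * (X - C (m : ℂ))) ^ k := by
    simp [Polynomial.map_pow]
  rw [polyApply, this, map_pow, map_mul, map_sub, aeval_C, aeval_C, aeval_X, ← Algebra.smul_def,
    Algebra.algebraMap_eq_smul_one, standardize]

lemma Matrix.IsHermitian.standardize {m σ : ℝ} {Y : Matrix N N ℂ} (hY : Y.IsHermitian) :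
    (standardize m σ Y).IsHermitian := by
  unfold _root_.standardize
  simp [Matrix.IsHermitian, hY.eq]

lemma eq_add_smul_standardize {m σ : ℝ} (hσ : σ ≠ 0) (Y : Matrix N N ℂ) :
    Y = (m : ℂ) • 1 + (σ : ℂ) • standardize m σ Y := by
  have : (σ : ℂ) ≠ 0 := by exact_mod_cast hσ
  simp [_root_.standardize, smul_smul, this]

lemma continuous_standardize (m σ : ℝ) :
    Continuous (_root_.standardize m σ : Matrix N N ℂ → Matrix N N ℂ) := by
  unfold _root_.standardize
  fun_prop

lemma standardize_conj {m σ : ℝ} {U : Matrix N N ℂ} (hU : U ∈ unitary (Matrix N N ℂ))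
    (Y : Matrix N N ℂ) : standardize m σ (U * Y * star U) = U * standardize m σ Y * star U := by
  unfold standardize
  simp [mul_sub, sub_mul, (Unitary.mem_iff.1 hU).2]

variable {Ω : Type*} [MeasurableSpace Ω] {ℙ : Measure Ω} {n : ℕ} {m σ : ℝ}
  {Y : (d : ℕ) → Ω → Matrix (Fin n × Fin d) (Fin n × Fin d) ℂ}

lemma UnitInv.standardize (hmeas : ∀ d, Measurable (Y d)) (hUI : UnitInv ℙ n Y) :
    UnitInv ℙ n fun d ω => standardize m σ (Y d ω) := by
  intro d U hU
  have hs := (continuous_standardize (N := Fin n × Fin d) m σ).measurable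
  have hc : Continuous fun X : Matrix (Fin n × Fin d) (Fin n × Fin d) ℂ => U * X * star U := by
    fun_prop
  have h := congrArg (Measure.map (_root_.standardize m σ)) (hUI d U hU)
  rw [Measure.map_map (f := fun ω => U * Y d ω * star U) hs (hc.measurable.comp (hmeas d)),
    Measure.map_map hs (hmeas d)] at h
  change Measure.map (fun ω => U * _root_.standardize m σ (Y d ω) * star U) ℙ = _
  rw [show (fun ω => U * _root_.standardize m σ (Y d ω) * star U) =
    _root_.standardize m σ ∘ fun ω => U * Y d ω * star U from
      funext fun ω => (standardize_conj hU _).symm]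
  exact h

lemma ntr_eq_re {d : ℕ} (X : Matrix (Fin n × Fin d) (Fin n × Fin d) ℂ) :
    ntr X = (((n : ℂ) * (d : ℂ))⁻¹ * X.trace).re := by
  have : ((n : ℂ) * (d : ℂ))⁻¹ = (((n : ℝ) * d)⁻¹ : ℝ) := by push_cast; rfl
  rw [this, Complex.re_ofReal_mul, ntr]
  simp only [Fintype.card_prod, Fintype.card_fin]
  push_cast
  rw [div_eq_inv_mul]

lemma eval_standardize_pow (k : ℕ) (x : ℝ) :
    ((C σ⁻¹ * (X - C m)) ^ k : ℝ[X]).eval x = (σ⁻¹ * (x - m)) ^ k := by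
  simp

theorem StrongConv.tendsto_ntr (hσ : 0 < σ) (hconv : StrongConv ℙ n Y (SC m σ)) :
    ∀ᵐ ω ∂ℙ, ∀ k, Tendsto (fun d => ntr (standardize m σ (Y d ω) ^ k)) atTop
      (𝓝 (semicircleMoment k)) := by
  filter_upwards [hconv] with ω hω k
  have h := (Complex.continuous_re.tendsto _).comp (hω ((C σ⁻¹ * (X - C m)) ^ k)).1
  simp only [polyApply_standardize_pow, eval_standardize_pow, Complex.ofReal_re] at h
  rw [integral_SC hσ, show (fun x => (σ⁻¹ * (m + σ * x - m)) ^ k) = fun x : ℝ => x ^ k from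
    funext fun x => by
      rw [add_sub_cancel_left, inv_mul_cancel_left₀ hσ.ne'], semiInt_pow] at h
  exact h.congr fun d => (ntr_eq_re _).symm

theorem StrongConv.eventually_norm_lt (hσ : 0 < σ) (hconv : StrongConv ℙ n Y (SC m σ)) :
    ∀ᵐ ω ∂ℙ, ∀ ε > 0, ∀ᶠ d in atTop, ‖standardize m σ (Y d ω)‖ < 2 + ε := by
  filter_upwards [hconv] with ω hω ε hε
  have h := (hω ((C σ⁻¹ * (X - C m)) ^ 1)).2
  simp only [polyApply_standardize_pow, eval_standardize_pow] at h
  simp only [pow_one] at h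
  refine h.eventually_lt_const (lt_of_le_of_lt (Real.sSup_le ?_ (by norm_num)) (by linarith :
    (2 : ℝ) < 2 + ε))
  rintro _ ⟨x, hx, rfl⟩
  have hx' := msupport_SC_subset m σ hx
  dsimp only
  rw [abs_mul, abs_of_pos (inv_pos.2 hσ), inv_mul_le_iff₀ hσ, abs_le]
  constructor <;> linarith [hx'.1, hx'.2]

theorem StrongConv.eventually_semiGood (hσ : 0 < σ) (hconv : StrongConv ℙ n Y (SC m σ)) :
    ∀ᵐ ω ∂ℙ, ∀ K, ∀ᶠ d in atTop, SemiGood K (standardize m σ (Y d ω)) := by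
  filter_upwards [hconv.tendsto_ntr hσ, hconv.eventually_norm_lt hσ] with ω h1 h2 K
  have hK : (0 : ℝ) < 1 / (K + 1) := by positivity
  have h3 : ∀ᶠ d in atTop, ∀ k ∈ Finset.range (K + 1),
      |ntr (standardize m σ (Y d ω) ^ k) - semicircleMoment k| < 1 / (K + 1) := by
    rw [Filter.eventually_all_finset]
    exact fun k _ => Metric.tendsto_nhds.1 (h1 k) _ hK
  filter_upwards [h3, h2 _ hK] with d h3 h4
  exact ⟨fun k hk => h3 k (Finset.mem_range.2 (by omega)), h4⟩

end Standardization

section Slices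

open scoped Matrix.Norms.L2Operator

section Positivity

open scoped MatrixOrder

variable {N : Type*} [Fintype N] [DecidableEq N]

lemma posSemidef_smul_one_sub {M : Matrix N N ℂ} (hM : M.IsHermitian) {c : ℝ} (hc : ‖M‖ ≤ c) :
    ((c : ℂ) • 1 - M).PosSemidef := by
  have h := IsSelfAdjoint.le_algebraMap_norm_self (a := M) hM
  rw [Matrix.le_iff, Algebra.algebraMap_eq_smul_one] at h
  have h2 : ((c : ℂ) • 1 - M) = (‖M‖ • 1 - M) + ((c - ‖M‖ : ℝ) : ℂ) • (1 : Matrix N N ℂ) := by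
    rw [← Complex.coe_smul]; push_cast; module
  rw [h2]
  exact h.add (Matrix.PosSemidef.one.smul (by exact_mod_cast sub_nonneg.2 hc))

lemma posSemidef_smul_one_add {M : Matrix N N ℂ} (hM : M.IsHermitian) {c : ℝ} (hc : ‖M‖ ≤ c) :
    ((c : ℂ) • 1 + M).PosSemidef := by
  have := posSemidef_smul_one_sub (M := -M) hM.neg ((norm_neg M).trans_le hc)
  rwa [sub_neg_eq_add] at this

lemma exists_conjTranspose_mul_self {B : Matrix N N ℂ} (hB : B.PosSemidef) :
    ∃ D : Matrix N N ℂ, B = Dᴴ * D :=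
  CStarAlgebra.nonneg_iff_eq_star_mul_self.1 hB.nonneg

lemma re_trace_mul_le {M B : Matrix N N ℂ} (hM : M.IsHermitian) (hB : B.PosSemidef) {c : ℝ}
    (hc : ‖M‖ ≤ c) : (M * B).trace.re ≤ c * B.trace.re := by
  obtain ⟨D, rfl⟩ := exists_conjTranspose_mul_self hB
  have h := ((posSemidef_smul_one_sub hM hc).mul_mul_conjTranspose_same D).trace_nonneg
  have e : (D * ((c : ℂ) • 1 - M) * Dᴴ).trace =
      (c : ℂ) * (Dᴴ * D).trace - (M * (Dᴴ * D)).trace := by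
    rw [mul_sub, sub_mul, trace_sub, mul_smul_comm, mul_one, smul_mul_assoc, trace_smul,
      trace_mul_comm D Dᴴ, smul_eq_mul, mul_assoc D M, trace_mul_comm D (M * Dᴴ), mul_assoc M]
  rw [e] at h
  have h' := (Complex.le_def.1 h).1
  rw [Complex.sub_re, Complex.re_ofReal_mul, Complex.zero_re] at h'
  linarith

end Positivity

/-- Partial transposition as a linear map. -/
def ptransLinear (n d : ℕ) : Matrix (Fin n × Fin d) (Fin n × Fin d) ℂ →ₗ[ℂ]
    Matrix (Fin n × Fin d) (Fin n × Fin d) ℂ where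
  toFun := ptrans
  map_add' _ _ := rfl
  map_smul' _ _ := rfl

variable {n d : ℕ}

/-- The operator `b ↦ a ⊗ b`. -/
def tensorLeft (d : ℕ) (a : EuclideanSpace ℂ (Fin n)) : Matrix (Fin n × Fin d) (Fin d) ℂ :=
  fun p l => if p.2 = l then a p.1 else 0

lemma tensorLeft_sub (a b : EuclideanSpace ℂ (Fin n)) :
    tensorLeft d (a - b) = tensorLeft d a - tensorLeft d b := by
  ext p l
  simp only [tensorLeft, Matrix.sub_apply, PiLp.sub_apply]
  split_ifs <;> simp

lemma tensorLeft_smul (c : ℂ) (a : EuclideanSpace ℂ (Fin n)) :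
    tensorLeft d (c • a) = c • tensorLeft d a := by
  ext p l
  simp [tensorLeft]

lemma conjTranspose_tensorLeft_mul_self (a : EuclideanSpace ℂ (Fin n)) :
    (tensorLeft d a)ᴴ * tensorLeft d a = ((‖a‖ ^ 2 : ℝ) : ℂ) • 1 := by
  ext i j
  simp only [Matrix.mul_apply, conjTranspose_apply, tensorLeft, Fintype.sum_prod_type,
    Matrix.smul_apply, Matrix.one_apply, EuclideanSpace.norm_sq_eq]
  by_cases h : i = j
  · subst h
    simp [Complex.conj_mul']
  · simp [h, Ne.symm h]

lemma norm_tensorLeft_le (a : EuclideanSpace ℂ (Fin n)) : ‖tensorLeft d a‖ ≤ ‖a‖ := by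
  have h : ‖tensorLeft d a‖ * ‖tensorLeft d a‖ ≤ ‖a‖ * ‖a‖ := by
    rw [← l2_opNorm_conjTranspose_mul_self, conjTranspose_tensorLeft_mul_self, norm_smul]
    have h1 : ‖(1 : Matrix (Fin d) (Fin d) ℂ)‖ ≤ 1 := norm_le_one_of_isometry 1 (by simp)
    have h2 : ‖((‖a‖ ^ 2 : ℝ) : ℂ)‖ = ‖a‖ * ‖a‖ := by
      rw [Complex.norm_real, Real.norm_of_nonneg (by positivity), sq]
    rw [h2]
    exact mul_le_of_le_one_right (by positivity) h1
  exact le_of_sq_le_sq (by simpa [sq] using h) (norm_nonneg _)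

/-- The block compression of `X` by the vector `a`. -/
def slice (a : EuclideanSpace ℂ (Fin n)) (X : Matrix (Fin n × Fin d) (Fin n × Fin d) ℂ) :
    Matrix (Fin d) (Fin d) ℂ :=
  (tensorLeft d a)ᴴ * X * tensorLeft d a

lemma slice_smul (c : ℂ) (a : EuclideanSpace ℂ (Fin n))
    (X : Matrix (Fin n × Fin d) (Fin n × Fin d) ℂ) :
    slice (c • a) X = ((‖c‖ ^ 2 : ℝ) : ℂ) • slice a X := by
  rw [slice, tensorLeft_smul, conjTranspose_smul, Matrix.smul_mul, Matrix.smul_mul, Matrix.mul_smul,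
    smul_smul, slice]
  congr 1
  rw [← starRingEnd_apply, Complex.conj_mul']
  push_cast; rfl

lemma norm_slice_sub_le (a b : EuclideanSpace ℂ (Fin n))
    (X : Matrix (Fin n × Fin d) (Fin n × Fin d) ℂ) :
    ‖slice a X - slice b X‖ ≤ ‖a - b‖ * (‖a‖ + ‖b‖) * ‖X‖ := by
  have e : slice a X - slice b X =
      (tensorLeft d (a - b))ᴴ * X * tensorLeft d a +
        (tensorLeft d b)ᴴ * X * tensorLeft d (a - b) := by
    rw [slice, slice, tensorLeft_sub, conjTranspose_sub]
    simp only [Matrix.sub_mul, Matrix.mul_sub]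
    abel
  have key : ∀ u v : EuclideanSpace ℂ (Fin n),
      ‖(tensorLeft d u)ᴴ * X * tensorLeft d v‖ ≤ ‖u‖ * ‖X‖ * ‖v‖ := by
    intro u v
    refine (l2_opNorm_mul _ _).trans ?_
    refine mul_le_mul ((l2_opNorm_mul _ _).trans ?_) (norm_tensorLeft_le v) (norm_nonneg _)
      (by positivity)
    rw [l2_opNorm_conjTranspose]
    exact mul_le_mul_of_nonneg_right (norm_tensorLeft_le u) (norm_nonneg _)
  rw [e]
  refine (norm_add_le _ _).trans ((add_le_add (key _ _) (key _ _)).trans (le_of_eq ?_))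
  ring

/-- The rescaled block compression as a linear map. -/
def sliceLinear (d : ℕ) (a : EuclideanSpace ℂ (Fin n)) :
    Matrix (Fin n × Fin d) (Fin n × Fin d) ℂ →ₗ[ℂ] Matrix (Fin d) (Fin d) ℂ where
  toFun X := ((√n : ℝ) : ℂ) • slice a X
  map_add' X X' := by simp [slice, Matrix.mul_add, Matrix.add_mul]
  map_smul' c X := by simp [slice, smul_comm c]

lemma norm_sliceLinear (a : EuclideanSpace ℂ (Fin n))
    (X : Matrix (Fin n × Fin d) (Fin n × Fin d) ℂ) :
    ‖sliceLinear d a X‖ = √n * ‖slice a X‖ := by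
  change ‖((√n : ℝ) : ℂ) • slice a X‖ = _
  rw [norm_smul, Complex.norm_real, Real.norm_of_nonneg (Real.sqrt_nonneg _)]

/-- Conjugation by `tensorLeft d a` is the Kronecker product with the rank-one matrix `a a*`. -/
lemma tensorLeft_mul_mul_conjTranspose (a : EuclideanSpace ℂ (Fin n)) (B : Matrix (Fin d) (Fin d) ℂ) :
    tensorLeft d a * B * (tensorLeft d a)ᴴ = vecMulVec a (star (a : Fin n → ℂ)) ⊗ₖ B := by
  ext p q
  simp only [Matrix.mul_apply, conjTranspose_apply, tensorLeft, kroneckerMap_apply, vecMulVec_apply,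
    ite_mul, zero_mul, Finset.sum_ite_eq, Finset.mem_univ, if_true, Pi.star_apply]
  simp [apply_ite, mul_comm, mul_left_comm, mul_assoc]

lemma Matrix.IsHermitian.slice {X : Matrix (Fin n × Fin d) (Fin n × Fin d) ℂ} (hX : X.IsHermitian)
    (a : EuclideanSpace ℂ (Fin n)) : (slice a X).IsHermitian :=
  isHermitian_conjTranspose_mul_mul _ hX

/-- A linear functional bound on separable matrices. -/
lemma re_trace_mul_le_of_mem_SEP {Z S : Matrix (Fin n × Fin d) (Fin n × Fin d) ℂ}
    (hZ : Z.IsHermitian) {c : ℝ} (hc : ∀ a : EuclideanSpace ℂ (Fin n), ‖a‖ = 1 → ‖slice a Z‖ ≤ c)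
    (hS : S ∈ SEP n d) : (Z * S).trace.re ≤ c * S.trace.re := by
  have hc' : ∀ a : EuclideanSpace ℂ (Fin n), ‖slice a Z‖ ≤ c * ‖a‖ ^ 2 := by
    intro a
    rcases eq_or_ne a 0 with rfl | ha
    · have : slice (0 : EuclideanSpace ℂ (Fin n)) Z = 0 := by
        have : tensorLeft d (0 : EuclideanSpace ℂ (Fin n)) = 0 := by ext; simp [tensorLeft]
        rw [slice, this, Matrix.mul_zero]
      simp [this]
    · have hn : ‖a‖ ≠ 0 := norm_ne_zero_iff.2 ha
      have h := hc (((‖a‖⁻¹ : ℝ) : ℂ) • a) (by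
        rw [norm_smul, Complex.norm_real, Real.norm_of_nonneg (by positivity),
          inv_mul_cancel₀ hn])
      rw [slice_smul, norm_smul, Complex.norm_real, Complex.norm_real,
        Real.norm_of_nonneg (by positivity), Real.norm_of_nonneg (by positivity), inv_pow,
        inv_mul_le_iff₀ (by positivity)] at h
      linarith
  have hrank : ∀ (a : EuclideanSpace ℂ (Fin n)) (B : Matrix (Fin d) (Fin d) ℂ), B.PosSemidef →
      (Z * (vecMulVec a (star (a : Fin n → ℂ)) ⊗ₖ B)).trace.re ≤
        c * (vecMulVec a (star (a : Fin n → ℂ)) ⊗ₖ B).trace.re := by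
    intro a B hB
    have h := re_trace_mul_le (hZ.slice a) hB (hc' a)
    rw [← tensorLeft_mul_mul_conjTranspose]
    have e1 : (Z * (tensorLeft d a * B * (tensorLeft d a)ᴴ)).trace = (slice a Z * B).trace := by
      rw [← Matrix.mul_assoc, trace_mul_comm, slice]
      simp only [Matrix.mul_assoc]
    have e2 : (tensorLeft d a * B * (tensorLeft d a)ᴴ).trace =
        ((‖a‖ ^ 2 : ℝ) : ℂ) * B.trace := by
      rw [trace_mul_comm, ← Matrix.mul_assoc, conjTranspose_tensorLeft_mul_self, smul_mul_assoc,
        one_mul, trace_smul, smul_eq_mul]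
    rw [e1, e2, Complex.re_ofReal_mul]
    linarith
  obtain ⟨k, A, B, hA, hB, rfl⟩ := hS
  rw [Matrix.mul_sum, trace_sum, trace_sum, Complex.re_sum, Complex.re_sum, Finset.mul_sum]
  refine Finset.sum_le_sum fun i _ => ?_
  obtain ⟨D, hD⟩ := exists_conjTranspose_mul_self (hA i)
  have hAi : A i = ∑ l, vecMulVec (WithLp.toLp 2 fun x => star (D l x) : EuclideanSpace ℂ (Fin n))
      (star ((WithLp.toLp 2 fun x => star (D l x) : EuclideanSpace ℂ (Fin n)) : Fin n → ℂ)) := by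
    rw [hD]
    ext x y
    simp [Matrix.mul_apply, Matrix.sum_apply, vecMulVec_apply]
  have hAB : A i ⊗ₖ B i = ∑ l,
      vecMulVec (WithLp.toLp 2 fun x => star (D l x) : EuclideanSpace ℂ (Fin n))
      (star ((WithLp.toLp 2 fun x => star (D l x) : EuclideanSpace ℂ (Fin n)) : Fin n → ℂ)) ⊗ₖ
        B i := by
    conv_lhs => rw [hAi]
    ext p q
    simp [Matrix.sum_apply, Finset.sum_mul]
  rw [hAB, Matrix.mul_sum, trace_sum, trace_sum, Complex.re_sum, Complex.re_sum, Finset.mul_sum]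
  exact Finset.sum_le_sum fun l _ => hrank _ _ (hB i)

end Slices

section Entanglement

open scoped Matrix.Norms.L2Operator

variable {Ω : Type*} [MeasurableSpace Ω] {ℙ : Measure Ω} [IsProbabilityMeasure ℙ] {n : ℕ}
  {Z : (d : ℕ) → Ω → Matrix (Fin n × Fin d) (Fin n × Fin d) ℂ}

lemma ae_eventually_norm_ptrans_lt (hn : 1 ≤ n)
    (hmeas : ∀ d, Measurable (Z d)) (hherm : ∀ d ω, (Z d ω).IsHermitian) (hUI : UnitInv ℙ n Z)
    (hgood : ∀ᵐ ω ∂ℙ, ∀ K, ∀ᶠ d in atTop, SemiGood K (Z d ω)) {ε : ℝ} (hε : 0 < ε) :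
    ∀ᵐ ω ∂ℙ, ∀ᶠ d in atTop, ‖ptrans (Z d ω)‖ < 2 + ε :=
  ae_eventually_norm_map_lt ℙ hn Z hmeas hherm hUI hgood (fun d => Fin n × Fin d)
    (fun d => by simpa using Nat.le_mul_of_pos_left d hn) (fun d => ptransLinear n d)
    (by positivity) (fun _ X => norm_ptrans_le X) (fun _ _ _ _ _ hE => hE.ptrans) hε

lemma ae_eventually_norm_slice_lt (hn : 1 ≤ n)
    (hmeas : ∀ d, Measurable (Z d)) (hherm : ∀ d ω, (Z d ω).IsHermitian) (hUI : UnitInv ℙ n Z)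
    (hgood : ∀ᵐ ω ∂ℙ, ∀ K, ∀ᶠ d in atTop, SemiGood K (Z d ω)) {ε : ℝ} (hε : 0 < ε)
    (a : EuclideanSpace ℂ (Fin n)) (ha : ‖a‖ = 1) :
    ∀ᵐ ω ∂ℙ, ∀ᶠ d in atTop, √n * ‖slice a (Z d ω)‖ < 2 + ε := by
  have hiso : ∀ d, (tensorLeft d a)ᴴ * tensorLeft d a = 1 := fun d => by
    simp [conjTranspose_tensorLeft_mul_self, ha]
  have h := ae_eventually_norm_map_lt ℙ hn Z hmeas hherm hUI hgood (fun d => Fin d)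
    (fun d => by simp) (fun d => sliceLinear d a) (Real.sqrt_nonneg n)
    (fun d X => by
      rw [norm_sliceLinear]
      exact mul_le_mul_of_nonneg_left (norm_compression_le _ (hiso d) X) (Real.sqrt_nonneg _))
    (fun d hd ι _ E hE => hE.compression (tensorLeft d a) (hiso d) (√n) (by
      have : (n : ℝ) ≠ 0 := by exact_mod_cast (by omega : n ≠ 0)
      rw [Real.sq_sqrt (Nat.cast_nonneg n)]
      simp only [Fintype.card_prod, Fintype.card_fin]
      push_cast
      rw [mul_inv, mul_inv_cancel_left₀ this])) hε
  simpa only [norm_sliceLinear] using h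

/-- A uniform bound over all block compressions. -/
lemma ae_eventually_forall_norm_slice_le (hn : 1 ≤ n)
    (hmeas : ∀ d, Measurable (Z d)) (hherm : ∀ d ω, (Z d ω).IsHermitian) (hUI : UnitInv ℙ n Z)
    (hgood : ∀ᵐ ω ∂ℙ, ∀ K, ∀ᶠ d in atTop, SemiGood K (Z d ω)) {ε : ℝ} (hε : 0 < ε) :
    ∀ᵐ ω ∂ℙ, ∀ᶠ d in atTop, ∀ a : EuclideanSpace ℂ (Fin n), ‖a‖ = 1 →
      ‖slice a (Z d ω)‖ ≤ 2 / √n + ε := by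
  obtain ⟨t, ht, htfin, hcover⟩ := (isCompact_sphere (0 : EuclideanSpace ℂ (Fin n)) 1)
    |>.finite_cover_balls (show 0 < ε / 12 by positivity)
  have hn1 : 1 ≤ √n := Real.one_le_sqrt.2 (by exact_mod_cast hn)
  have hnet : ∀ᵐ ω ∂ℙ, ∀ a ∈ t, ∀ᶠ d in atTop, √n * ‖slice a (Z d ω)‖ < 2 + ε / 2 := by
    rw [ae_ball_iff htfin.countable]
    exact fun a hat => ae_eventually_norm_slice_lt hn hmeas hherm hUI hgood (half_pos hε) a
      (by simpa using ht hat)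
  filter_upwards [hnet, hgood] with ω h1 h2
  filter_upwards [(eventually_all_finite htfin).2 h1, h2 0] with d h3 h4 a ha
  obtain ⟨b, hb, hab⟩ := Set.mem_iUnion₂.1 (hcover (show a ∈ Metric.sphere 0 1 by simpa using ha))
  rw [Metric.mem_ball, dist_eq_norm] at hab
  have hbn : ‖b‖ = 1 := by simpa using ht hb
  have hZ : ‖Z d ω‖ ≤ 3 := by
    have := h4.2
    norm_num at this
    exact this.le
  have hdiff := norm_slice_sub_le a b (Z d ω)
  rw [ha, hbn] at hdiff
  have hsb : ‖slice b (Z d ω)‖ ≤ 2 / √n + ε / 2 := by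
    have h := h3 b hb
    have : ‖slice b (Z d ω)‖ ≤ (2 + ε / 2) / √n := by
      rw [le_div_iff₀ (by positivity)]; linarith
    refine this.trans ?_
    rw [add_div]
    exact add_le_add_right (div_le_self (by positivity) hn1) _
  have hfin : ‖a - b‖ * (1 + 1) * ‖Z d ω‖ ≤ ε / 12 * (1 + 1) * 3 := by gcongr
  linarith [norm_sub_norm_le (slice a (Z d ω)) (slice b (Z d ω))]

lemma ptrans_isHermitian {d : ℕ} {X : Matrix (Fin n × Fin d) (Fin n × Fin d) ℂ}
    (hX : X.IsHermitian) : (ptrans X).IsHermitian := by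
  ext p q
  exact hX.apply _ _

lemma ptrans_add_smul {d : ℕ} (m σ : ℂ) (X : Matrix (Fin n × Fin d) (Fin n × Fin d) ℂ) :
    ptrans (m • 1 + σ • X) = m • 1 + σ • ptrans X := by
  ext p q
  simp only [ptrans, Matrix.add_apply, Matrix.smul_apply, Matrix.one_apply, Prod.ext_iff]
  simp only [eq_comm (a := q.1)]

lemma posSemidef_add_smul {N : Type*} [Fintype N] [DecidableEq N] {M : Matrix N N ℂ}
    (hM : M.IsHermitian) {m σ : ℝ} (hσ : 0 ≤ σ) (h : σ * ‖M‖ ≤ m) :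
    ((m : ℂ) • 1 + (σ : ℂ) • M).PosSemidef := by
  refine posSemidef_smul_one_add ?_ ?_
  · simp [Matrix.IsHermitian, hM.eq]
  · rwa [norm_smul, Complex.norm_real, Real.norm_of_nonneg hσ]

lemma ntr_mul_add_smul {d : ℕ} (m σ : ℝ) (Z : Matrix (Fin n × Fin d) (Fin n × Fin d) ℂ) :
    (Z * ((m : ℂ) • 1 + (σ : ℂ) • Z)).trace.re / Fintype.card (Fin n × Fin d) =
      m * ntr (Z ^ 1) + σ * ntr (Z ^ 2) := by
  rw [mul_add, mul_smul_comm, mul_smul_comm, mul_one, trace_add, trace_smul, trace_smul, pow_one,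
    pow_two, Complex.add_re, smul_eq_mul, smul_eq_mul, Complex.re_ofReal_mul,
    Complex.re_ofReal_mul, ntr, ntr]
  ring

lemma ntr_add_smul {d : ℕ} (m σ : ℝ) (Z : Matrix (Fin n × Fin d) (Fin n × Fin d) ℂ) :
    ((m : ℂ) • 1 + (σ : ℂ) • Z).trace.re / Fintype.card (Fin n × Fin d) =
      m * ntr (Z ^ 0) + σ * ntr (Z ^ 1) := by
  rw [trace_add, trace_smul, trace_smul, pow_one,
    pow_zero, Complex.add_re, smul_eq_mul, smul_eq_mul, Complex.re_ofReal_mul,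
    Complex.re_ofReal_mul, ntr, ntr]
  ring

end Entanglement

/-- for `n ≥ 17` and `2/√n < σ/m < 1/2`, shifted semicircular
ensembles `SC_{m,σ}` are asymptotically positive semidefinite, PPT, and entangled. -/
theorem stmt11
    {Ω : Type*} [MeasurableSpace Ω] (ℙ : Measure Ω) [IsProbabilityMeasure ℙ]
    (n : ℕ) (hn : 17 ≤ n) (m σ : ℝ) (hm : 0 < m) (hσ : 0 < σ)
    (h1 : 2 / Real.sqrt n < σ / m) (h2 : σ / m < 1 / 2)
    (Y : (d : ℕ) → Ω → Matrix (Fin n × Fin d) (Fin n × Fin d) ℂ)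
    (hmeas : ∀ d, Measurable (Y d))
    (hherm : ∀ d ω, (Y d ω).IsHermitian)
    (hUI : UnitInv ℙ n Y)
    (hconv : StrongConv ℙ n Y (SC m σ)) :
    ∀ᵐ ω ∂ℙ, ∀ᶠ d : ℕ in atTop,
      (Y d ω).PosSemidef ∧ Y d ω ∈ PPT n d ∧ Y d ω ∉ SEP n d := by
  have hn1 : 1 ≤ n := by omega
  have hmeasZ : ∀ d, Measurable fun ω => standardize m σ (Y d ω) := fun d =>
    (continuous_standardize m σ).measurable.comp (hmeas d)
  have hhermZ : ∀ d ω, (standardize m σ (Y d ω)).IsHermitian := fun d ω => (hherm d ω).standardize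
  have hUIZ : UnitInv ℙ n fun d ω => standardize m σ (Y d ω) := hUI.standardize hmeas
  have hgood := hconv.eventually_semiGood hσ
  obtain ⟨ε, hε, hεm⟩ : ∃ ε > 0, σ * (2 + ε) ≤ m := by
    refine ⟨m / σ - 2, ?_, ?_⟩
    · rw [div_lt_div_iff₀ hm two_pos] at h2
      rw [gt_iff_lt, sub_pos, lt_div_iff₀ hσ]
      linarith
    · rw [add_sub_cancel, mul_div_cancel₀ _ hσ.ne']
  obtain ⟨τ, hτ, hτm⟩ : ∃ τ > 0, (2 / √n + τ) * m < σ := by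
    refine ⟨(σ / m - 2 / √n) / 2, by linarith, ?_⟩
    rw [← lt_div_iff₀ hm]
    linarith
  filter_upwards [hconv.eventually_norm_lt hσ, hconv.tendsto_ntr hσ,
    ae_eventually_norm_ptrans_lt hn1 hmeasZ hhermZ hUIZ hgood hε,
    ae_eventually_forall_norm_slice_le hn1 hmeasZ hhermZ hUIZ hgood hτ] with ω hnorm hntr hpt hsl
  have hm0 : semicircleMoment 0 = 1 := by simpa using (semicircleMoment_eq 0).1
  have hm1 : semicircleMoment 1 = 0 := by simpa using (semicircleMoment_eq 0).2
  have hm2 : semicircleMoment 2 = 1 := by simpa using (semicircleMoment_eq 1).1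
  have hlim : ∀ᶠ d in atTop,
      (2 / √n + τ) * (m * ntr (standardize m σ (Y d ω) ^ 0) +
        σ * ntr (standardize m σ (Y d ω) ^ 1)) <
      m * ntr (standardize m σ (Y d ω) ^ 1) + σ * ntr (standardize m σ (Y d ω) ^ 2) := by
    refine Tendsto.eventually_lt
      ((((hntr 0).const_mul m).add ((hntr 1).const_mul σ)).const_mul (2 / √n + τ))
      (((hntr 1).const_mul m).add ((hntr 2).const_mul σ)) ?_
    rw [hm0, hm1, hm2]
    linarith
  filter_upwards [hnorm ε hε, hpt, hsl, hlim] with d hd1 hd2 hd3 hd4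
  have hZ := hhermZ d ω
  have hY : Y d ω = (m : ℂ) • 1 + (σ : ℂ) • standardize m σ (Y d ω) :=
    eq_add_smul_standardize hσ.ne' _
  have hpsd : (Y d ω).PosSemidef := by
    rw [hY]
    exact posSemidef_add_smul hZ hσ.le ((mul_le_mul_of_nonneg_left hd1.le hσ.le).trans hεm)
  refine ⟨hpsd, ⟨hpsd, ?_⟩, fun hsep => ?_⟩
  · rw [hY, ptrans_add_smul]
    exact posSemidef_add_smul (ptrans_isHermitian hZ) hσ.le
      ((mul_le_mul_of_nonneg_left hd2.le hσ.le).trans hεm)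
  · have h := re_trace_mul_le_of_mem_SEP hZ hd3 hsep
    rw [← ntr_mul_add_smul, ← ntr_add_smul, ← hY, mul_div_assoc'] at hd4
    exact absurd hd4 (not_lt.2 (div_le_div_of_nonneg_right h (Nat.cast_nonneg _)))
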